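/- arXiv:2511.13537 — 2 statements merged into one kernel-verified Lean document; each statement's English description precedes it below -/
import Mathlib

section
/- The set consisting of the zero polynomial together with all homogeneous polynomials f ∈ ℂ[X₀, …, Xₙ] of degree d − n − 1 satisfying f ∈ I_v^{ord_P(v)} for every v in the point residual R₀(P) is a ℂ-linear subspace of the polynomial ring of dimension exactly 1. (This is the adjoint-interpolation content of the paper's main Theorem 1: the adjoint polynomial of an arbitrary convex polytope is, up to scaling, the unique polynomial of degree d − n − 1 vanishing to the prescribed orders at the finitely many points of the point residual.) -/
open MvPolynomial Finset Classical

noncomputable section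

/-- The homogenization embedding `y ↦ (1, y₁, …, yₙ)`. -/
def lift1 {n : ℕ} (y : Fin n → ℝ) : Fin (n + 1) → ℝ := Fin.cons 1 y

/-- The polytope `P = {y ∈ ℝⁿ | ℓᵢ(1,y) ≥ 0 for all i}`. -/
def polytopeOf {n d : ℕ} (ℓ : Fin d → MvPolynomial (Fin (n + 1)) ℝ) : Set (Fin n → ℝ) :=
  {y | ∀ i, 0 ≤ eval (lift1 y) (ℓ i)}

/-- The facet `Fᵢ = {y ∈ P | ℓᵢ(1,y) = 0}`. -/
def facetOf {n d : ℕ} (ℓ : Fin d → MvPolynomial (Fin (n + 1)) ℝ) (i : Fin d) :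
    Set (Fin n → ℝ) :=
  {y ∈ polytopeOf ℓ | eval (lift1 y) (ℓ i) = 0}

/-- The flat `F_v = {i | ℓᵢ(v) = 0}` of all facet hyperplanes through `v`. -/
def flatOf {n d : ℕ} (ℓ : Fin d → MvPolynomial (Fin (n + 1)) ℝ) (v : Fin (n + 1) → ℝ) :
    Finset (Fin d) :=
  Finset.univ.filter fun i => eval v (ℓ i) = 0

/-- The rank `r_v`: the dimension of the linear span of `{ℓᵢ : i ∈ F_v}`. -/
def rkOf {n d : ℕ} (ℓ : Fin d → MvPolynomial (Fin (n + 1)) ℝ) (v : Fin (n + 1) → ℝ) : ℕ :=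
  Module.finrank ℝ (Submodule.span ℝ (ℓ '' (flatOf ℓ v : Set (Fin d))))

/-- The nullity `nl_v = |F_v| − r_v`. -/
def nlOf {n d : ℕ} (ℓ : Fin d → MvPolynomial (Fin (n + 1)) ℝ) (v : Fin (n + 1) → ℝ) : ℕ :=
  (flatOf ℓ v).card - rkOf ℓ v

/-- The set `P_v = {y ∈ P | ℓᵢ(1,y) = 0 for all i ∈ F_v}`. -/
def faceOf {n d : ℕ} (ℓ : Fin d → MvPolynomial (Fin (n + 1)) ℝ) (v : Fin (n + 1) → ℝ) :
    Set (Fin n → ℝ) :=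
  {y ∈ polytopeOf ℓ | ∀ i ∈ flatOf ℓ v, eval (lift1 y) (ℓ i) = 0}

/-- The order `ord_P(L_v)`: equal to `nl_v` if `P_v` is nonempty with affine span of
dimension `n − r_v`, and to `nl_v + 1` otherwise. -/
def ordOf {n d : ℕ} (ℓ : Fin d → MvPolynomial (Fin (n + 1)) ℝ) (v : Fin (n + 1) → ℝ) : ℕ :=
  if (faceOf ℓ v).Nonempty ∧
      Module.finrank ℝ (affineSpan ℝ (faceOf ℓ v)).direction = n - rkOf ℓ v
  then nlOf ℓ v
  else nlOf ℓ v + 1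

/-- The ideal `I_v ⊆ ℂ[X₀,…,Xₙ]` generated by all homogeneous degree-1 polynomials
vanishing at the real point `v`. -/
def pointIdealC {n : ℕ} (v : Fin (n + 1) → ℝ) : Ideal (MvPolynomial (Fin (n + 1)) ℂ) :=
  Ideal.span {p | p.IsHomogeneous 1 ∧ eval (fun i => (v i : ℂ)) p = 0}

/-- The ideal `I_v ⊆ ℝ[X₀,…,Xₙ]` generated by all homogeneous degree-1 polynomials
vanishing at `v`. -/
def pointIdealR {n : ℕ} (v : Fin (n + 1) → ℝ) : Ideal (MvPolynomial (Fin (n + 1)) ℝ) :=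
  Ideal.span {p | p.IsHomogeneous 1 ∧ eval v p = 0}

/-- Complexification of a real polynomial. -/
def toC {n : ℕ} (p : MvPolynomial (Fin (n + 1)) ℝ) : MvPolynomial (Fin (n + 1)) ℂ :=
  map (algebraMap ℝ ℂ) p

/-- The hypotheses on the facet equations `ℓ₁, …, ℓ_d` of a full-dimensional compact convex
polytope `P ⊆ ℝⁿ`: the `ℓᵢ` are pairwise non-proportional homogeneous degree-1 polynomials,
`P` is compact with affine span all of `ℝⁿ`, and each facet `Fᵢ` is nonempty with affine
span of dimension `n − 1`. -/
structure IsPolytopeSetup {n d : ℕ} (ℓ : Fin d → MvPolynomial (Fin (n + 1)) ℝ) : Prop where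
  hn : 1 ≤ n
  hd : n + 1 ≤ d
  hhom : ∀ i, (ℓ i).IsHomogeneous 1
  hne : ∀ i, ℓ i ≠ 0
  hprop : ∀ i j, i ≠ j → ∀ c : ℝ, c • ℓ i ≠ ℓ j
  hcpt : IsCompact (polytopeOf ℓ)
  hfull : affineSpan ℝ (polytopeOf ℓ) = ⊤
  hfacet_ne : ∀ i, (facetOf ℓ i).Nonempty
  hfacet : ∀ i, Module.finrank ℝ (affineSpan ℝ (facetOf ℓ i)).direction = n - 1

namespace Adj

/-- linear form of a real functional -/
def lin {N : ℕ} (φ : Module.Dual ℝ (Fin N → ℝ)) : MvPolynomial (Fin N) ℂ :=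
  ∑ j, C ((φ (Pi.single j 1) : ℝ) : ℂ) * X j

/-- `X ↦ v + T X` -/
def tau {N : ℕ} (v : Fin N → ℝ) :
    MvPolynomial (Fin N) ℂ →ₐ[ℂ] Polynomial (MvPolynomial (Fin N) ℂ) :=
  aeval (fun j => Polynomial.C (C (v j : ℂ)) + Polynomial.X * Polynomial.C (X j))

/-- vanishing order -/
def VanishAt {N : ℕ} (f : MvPolynomial (Fin N) ℂ) (v : Fin N → ℝ) (s : ℕ) : Prop :=
  Polynomial.X ^ s ∣ tau v f

/-- pull back along a linear map -/
def pb {M N : ℕ} (A : (Fin M → ℝ) →ₗ[ℝ] (Fin N → ℝ)) :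
    MvPolynomial (Fin N) ℂ →ₐ[ℂ] MvPolynomial (Fin M) ℂ :=
  aeval (fun j => lin (LinearMap.proj j ∘ₗ A))

lemma dual_apply {N : ℕ} (φ : Module.Dual ℝ (Fin N → ℝ)) (v : Fin N → ℝ) :
    φ v = ∑ j, φ (Pi.single j 1) * v j := by
  conv_lhs => rw [pi_eq_sum_univ' v]
  simp [map_sum, mul_comm]

lemma lin_add {N : ℕ} (φ ψ : Module.Dual ℝ (Fin N → ℝ)) : lin (φ + ψ) = lin φ + lin ψ := by
  simp [lin, add_mul, Finset.sum_add_distrib]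

lemma lin_smul {N : ℕ} (c : ℝ) (φ : Module.Dual ℝ (Fin N → ℝ)) :
    lin (c • φ) = C (c : ℂ) * lin φ := by
  simp [lin, Finset.mul_sum, mul_assoc]

lemma lin_zero {N : ℕ} : lin (0 : Module.Dual ℝ (Fin N → ℝ)) = 0 := by simp [lin]

lemma lin_sum {N : ℕ} {κ : Type*} (s : Finset κ) (φ : κ → Module.Dual ℝ (Fin N → ℝ)) :
    lin (∑ k ∈ s, φ k) = ∑ k ∈ s, lin (φ k) := by
  induction s using Finset.induction_on with
  | empty => simp [lin_zero]
  | insert a s ha ih => rw [Finset.sum_insert ha, Finset.sum_insert ha, lin_add, ih]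

lemma lin_proj {N : ℕ} (j : Fin N) : lin (LinearMap.proj j) = X j := by
  rw [lin, Finset.sum_eq_single j]
  · simp
  · intro b _ hb
    simp [Pi.single_apply, hb.symm]
  · simp

lemma lin_hom {N : ℕ} (φ : Module.Dual ℝ (Fin N → ℝ)) : (lin φ).IsHomogeneous 1 :=
  IsHomogeneous.sum _ _ _ fun j _ => isHomogeneous_C_mul_X _ _

lemma lin_eval {N : ℕ} (φ : Module.Dual ℝ (Fin N → ℝ)) (v : Fin N → ℝ) :
    eval (fun i => (v i : ℂ)) (lin φ) = ((φ v : ℝ) : ℂ) := by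
  rw [dual_apply φ v]
  simp [lin]

lemma lin_ne_zero {N : ℕ} {φ : Module.Dual ℝ (Fin N → ℝ)} (h : φ ≠ 0) : lin φ ≠ 0 := by
  intro h0
  apply h
  refine LinearMap.ext fun v => ?_
  have := lin_eval φ v
  rw [h0] at this
  simp only [map_zero] at this
  exact_mod_cast this.symm

lemma tau_X {N : ℕ} (v : Fin N → ℝ) (j : Fin N) :
    tau v (X j) = Polynomial.C (C (v j : ℂ)) + Polynomial.X * Polynomial.C (X j) := by
  simp [tau]

lemma tau_C {N : ℕ} (v : Fin N → ℝ) (c : ℂ) : tau v (C c) = Polynomial.C (C c) := by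
  simp [tau]

lemma tau_lin {N : ℕ} (φ : Module.Dual ℝ (Fin N → ℝ)) (v : Fin N → ℝ) :
    tau v (lin φ) = Polynomial.C (C ((φ v : ℝ) : ℂ)) + Polynomial.X * Polynomial.C (lin φ) := by
  have h1 : Polynomial.C (C ((φ v : ℝ) : ℂ)) = ∑ j, Polynomial.C
      (C ((φ (Pi.single j 1) : ℝ) : ℂ) : MvPolynomial (Fin N) ℂ) *
        Polynomial.C (C (v j : ℂ)) := by
    rw [dual_apply φ v, Complex.ofReal_sum, map_sum, map_sum]
    simp only [Complex.ofReal_mul, map_mul]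
  rw [h1, lin, map_sum, map_sum, Finset.mul_sum, ← Finset.sum_add_distrib]
  refine Finset.sum_congr rfl fun j _ => ?_
  rw [map_mul, tau_C, tau_X, map_mul]
  ring

lemma pb_X {M N : ℕ} (A : (Fin M → ℝ) →ₗ[ℝ] (Fin N → ℝ)) (j : Fin N) :
    pb A (X j) = lin (LinearMap.proj j ∘ₗ A) := by simp [pb]

lemma pb_lin {M N : ℕ} (A : (Fin M → ℝ) →ₗ[ℝ] (Fin N → ℝ)) (φ : Module.Dual ℝ (Fin N → ℝ)) :
    pb A (lin φ) = lin (φ ∘ₗ A) := by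
  have : φ ∘ₗ A = ∑ j, φ (Pi.single j 1) • (LinearMap.proj j ∘ₗ A) := by
    refine LinearMap.ext fun v => ?_
    rw [LinearMap.comp_apply, dual_apply φ]
    simp
  rw [this, lin_sum]
  simp only [lin_smul]
  conv_lhs => rw [lin]
  simp only [map_sum, map_mul, pb_X]
  simp [pb]

lemma tau_pb {M N : ℕ} (A : (Fin M → ℝ) →ₗ[ℝ] (Fin N → ℝ)) (w : Fin M → ℝ)
    (f : MvPolynomial (Fin N) ℂ) :
    tau w (pb A f) = Polynomial.mapAlgHom (pb A) (tau (A w) f) := by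
  have : (tau w).comp (pb A) = (Polynomial.mapAlgHom (pb A)).comp (tau (A w)) := by
    apply MvPolynomial.algHom_ext
    intro j
    simp only [AlgHom.comp_apply, pb_X, tau_X, tau_lin]
    simp [pb_X, pb]
  exact DFunLike.congr_fun this f

lemma vanish_pb {M N : ℕ} (A : (Fin M → ℝ) →ₗ[ℝ] (Fin N → ℝ)) {w : Fin M → ℝ}
    {f : MvPolynomial (Fin N) ℂ} {s : ℕ} (h : VanishAt f (A w) s) : VanishAt (pb A f) w s := by
  unfold VanishAt at *
  rw [tau_pb]
  have := map_dvd (Polynomial.mapAlgHom (pb A)) h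
  simpa using this

lemma vanish_mono {N : ℕ} {f : MvPolynomial (Fin N) ℂ} {v : Fin N → ℝ} {s t : ℕ} (hst : s ≤ t)
    (h : VanishAt f v t) : VanishAt f v s := (pow_dvd_pow _ hst).trans h

lemma pb_hom {M N : ℕ} (A : (Fin M → ℝ) →ₗ[ℝ] (Fin N → ℝ)) {e : ℕ}
    {f : MvPolynomial (Fin N) ℂ} (h : f.IsHomogeneous e) : (pb A f).IsHomogeneous e := by
  have := h.aeval (fun j => lin (LinearMap.proj j ∘ₗ A)) (n := 1) (fun j => lin_hom _)
  simpa [pb] using this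

lemma tau0_hom {N : ℕ} {e : ℕ} {f : MvPolynomial (Fin N) ℂ} (h : f.IsHomogeneous e) :
    tau 0 f = Polynomial.X ^ e * Polynomial.C f := by
  rw [f.as_sum, map_sum, map_sum, Finset.mul_sum]
  apply Finset.sum_congr rfl
  intro m hm
  have hd : m.degree = e := by
    by_contra hne
    exact (mem_support_iff.mp hm) (h.coeff_eq_zero hne)
  rw [MvPolynomial.monomial_eq]
  simp only [map_mul, tau_C, Finsupp.prod, map_prod, map_pow, tau_X]
  simp only [Pi.zero_apply, Complex.ofReal_zero, map_zero, zero_add, mul_pow,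
    Finset.prod_mul_distrib, Finset.prod_pow_eq_pow_sum]
  rw [← hd, Finsupp.degree_apply]
  ring

lemma hom_of_tau0 {N : ℕ} {e : ℕ} {f : MvPolynomial (Fin N) ℂ}
    (h : tau 0 f = Polynomial.X ^ e * Polynomial.C f) : f.IsHomogeneous e := by
  have h2 := sum_homogeneousComponent f
  have h3 : tau 0 f = ∑ k ∈ Finset.range (f.totalDegree + 1),
      Polynomial.X ^ k * Polynomial.C (homogeneousComponent k f) := by
    conv_lhs => rw [← h2]
    rw [map_sum]
    exact Finset.sum_congr rfl fun k _ => tau0_hom (homogeneousComponent_isHomogeneous k f)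
  rw [h] at h3
  have h4 := congrArg (fun p => Polynomial.coeff p e) h3
  simp only [Polynomial.finsetSum_coeff, Polynomial.coeff_X_pow_mul', Polynomial.coeff_C] at h4
  have h5 : ∀ k ∈ Finset.range (f.totalDegree + 1),
      (if k ≤ e then if e - k = 0 then homogeneousComponent k f else 0 else 0) =
      if k = e then homogeneousComponent e f else 0 := by
    intro k _
    by_cases hk : k = e
    · subst hk; simp
    · split_ifs <;> first | rfl | omega
  rw [Finset.sum_congr rfl h5, Finset.sum_ite_eq'] at h4
  simp only [le_refl, if_true, Nat.sub_self] at h4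
  rw [h4]
  split_ifs
  · exact homogeneousComponent_isHomogeneous e f
  · exact isHomogeneous_zero _ _ _

lemma hom_div {N e : ℕ} {φ : Module.Dual ℝ (Fin N → ℝ)} (hφ : φ ≠ 0)
    {g : MvPolynomial (Fin N) ℂ} (h : (lin φ * g).IsHomogeneous (e + 1)) : g.IsHomogeneous e := by
  apply hom_of_tau0
  have h1 := tau0_hom h
  rw [map_mul, tau_lin] at h1
  simp only [map_zero, Complex.ofReal_zero, zero_add, map_mul] at h1
  have hX : (Polynomial.X * Polynomial.C (lin φ) : Polynomial (MvPolynomial (Fin N) ℂ)) ≠ 0 :=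
    mul_ne_zero Polynomial.X_ne_zero (by simpa using lin_ne_zero hφ)
  apply mul_left_cancel₀ hX
  rw [h1]; ring

lemma hom_div_zero {N : ℕ} {φ : Module.Dual ℝ (Fin N → ℝ)}
    {g : MvPolynomial (Fin N) ℂ} (h : (lin φ * g).IsHomogeneous 0) : lin φ * g = 0 := by
  have h1 := tau0_hom h
  rw [map_mul, tau_lin] at h1
  have h2 := congrArg (Polynomial.eval 0) h1
  simp at h2
  rcases h2 with h2 | h2 <;> simp [h2]

lemma vanish_div_of_ne {N s : ℕ} {φ : Module.Dual ℝ (Fin N → ℝ)} {v : Fin N → ℝ}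
    {g : MvPolynomial (Fin N) ℂ} (hv : φ v ≠ 0) (h : VanishAt (lin φ * g) v s) :
    VanishAt g v s := by
  unfold VanishAt at *
  rw [map_mul, tau_lin] at h
  refine (Polynomial.prime_X).pow_dvd_of_dvd_mul_left s ?_ h
  intro hX
  rw [Polynomial.X_dvd_iff] at hX
  simp at hX
  exact hv hX

lemma vanish_div_of_eq {N s : ℕ} {φ : Module.Dual ℝ (Fin N → ℝ)} (hφ : φ ≠ 0) {v : Fin N → ℝ}
    {g : MvPolynomial (Fin N) ℂ} (hv : φ v = 0) (h : VanishAt (lin φ * g) v (s + 1)) :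
    VanishAt g v s := by
  unfold VanishAt at *
  rw [map_mul, tau_lin, hv] at h
  simp only [map_zero, Complex.ofReal_zero, zero_add] at h
  rw [pow_succ', mul_assoc] at h
  have h' := (mul_dvd_mul_iff_left Polynomial.X_ne_zero).mp h
  refine (Polynomial.prime_X).pow_dvd_of_dvd_mul_left s ?_ h'
  intro hX
  rw [Polynomial.X_dvd_iff] at hX
  simp at hX
  exact lin_ne_zero hφ hX

lemma tau_injective {N : ℕ} (v : Fin N → ℝ) : Function.Injective (tau v) := by
  let b : Polynomial (MvPolynomial (Fin N) ℂ) →ₐ[ℂ] MvPolynomial (Fin N) ℂ :=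
    ((aeval (fun j => X j - C (v j : ℂ)) : MvPolynomial (Fin N) ℂ →ₐ[ℂ] _)).comp
      ((Polynomial.aeval (1 : MvPolynomial (Fin N) ℂ)).restrictScalars ℂ)
  have : b.comp (tau v) = AlgHom.id ℂ _ := by
    apply MvPolynomial.algHom_ext
    intro j
    simp [b, tau_X]
  intro x y hxy
  have h1 := DFunLike.congr_fun this x
  have h2 := DFunLike.congr_fun this y
  simp only [AlgHom.comp_apply, AlgHom.id_apply] at h1 h2
  rw [← h1, ← h2, hxy]

lemma natDegree_tau {N e : ℕ} (v : Fin N → ℝ) {f : MvPolynomial (Fin N) ℂ}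
    (h : f.IsHomogeneous e) : (tau v f).natDegree ≤ e := by
  rw [f.as_sum, map_sum]
  apply Polynomial.natDegree_sum_le_of_forall_le
  intro m hm
  have hd : m.degree = e := by
    by_contra hne
    exact (mem_support_iff.mp hm) (h.coeff_eq_zero hne)
  rw [MvPolynomial.monomial_eq]
  simp only [map_mul, tau_C, Finsupp.prod, map_prod, map_pow, tau_X]
  refine (Polynomial.natDegree_C_mul_le _ _).trans ?_
  refine (Polynomial.natDegree_prod_le _ _).trans ?_
  rw [← hd, Finsupp.degree_apply]
  apply Finset.sum_le_sum
  intro j _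
  refine (Polynomial.natDegree_pow_le).trans ?_
  refine (Nat.mul_le_mul_left _ (?_ : _ ≤ 1)).trans (by simp)
  compute_degree

lemma eq_zero_of_vanish {N e s : ℕ} {v : Fin N → ℝ} {f : MvPolynomial (Fin N) ℂ}
    (h : f.IsHomogeneous e) (hs : e < s) (hv : VanishAt f v s) : f = 0 := by
  apply tau_injective v
  rw [map_zero]
  apply Polynomial.eq_zero_of_dvd_of_natDegree_lt hv
  rw [Polynomial.natDegree_X_pow]
  exact (natDegree_tau v h).trans_lt hs

lemma eval_of_vanish {N s : ℕ} {v : Fin N → ℝ} {f : MvPolynomial (Fin N) ℂ} (hs : 1 ≤ s)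
    (hv : VanishAt f v s) : eval (fun i => (v i : ℂ)) f = 0 := by
  have h1 := vanish_mono hs hv
  unfold VanishAt at h1
  rw [pow_one, Polynomial.X_dvd_iff, Polynomial.coeff_zero_eq_eval_zero] at h1
  let b : MvPolynomial (Fin N) ℂ →ₐ[ℂ] MvPolynomial (Fin N) ℂ :=
    ((Polynomial.aeval (0 : MvPolynomial (Fin N) ℂ)).restrictScalars ℂ).comp (tau v)
  have : b = (Algebra.ofId ℂ _).comp (aeval (fun i => (v i : ℂ))) := by
    apply MvPolynomial.algHom_ext
    intro j
    simp [b, tau_X, Algebra.ofId_apply]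
  have h2 := DFunLike.congr_fun this f
  simp only [b, AlgHom.comp_apply, AlgHom.restrictScalars_apply, Polynomial.coe_aeval_eq_eval,
    h1, Algebra.ofId_apply] at h2
  have h3 : (C (eval (fun i => (v i : ℂ)) f) : MvPolynomial (Fin N) ℂ) = 0 := h2.symm
  simpa using h3

lemma hom_one_var {e : ℕ} {f : MvPolynomial (Fin 1) ℂ} (h : f.IsHomogeneous e)
    {v : Fin 1 → ℝ} (hv : v ≠ 0) (hf : eval (fun i => (v i : ℂ)) f = 0) : f = 0 := by
  have hv0 : v 0 ≠ 0 := by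
    intro h0; apply hv; ext i; fin_cases i; simpa using h0
  apply MvPolynomial.funext
  intro x
  have hx : x = (x 0 / (v 0 : ℂ)) • (fun i => (v i : ℂ)) := by
    ext i; fin_cases i
    have : (v 0 : ℂ) ≠ 0 := by exact_mod_cast hv0
    simp [this]
  rw [hx]
  have h2 : ∀ (c : ℂ) (y : Fin 1 → ℂ), eval (c • y) f = c ^ e * eval y f := by
    intro c y
    rw [eval_eq', eval_eq', Finset.mul_sum]
    apply Finset.sum_congr rfl
    intro m hm
    have hd : m.degree = e := by
      by_contra hne
      exact (mem_support_iff.mp hm) (h.coeff_eq_zero hne)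
    have : m 0 = e := by rw [← hd]; simp [Finsupp.degree_eq_sum]
    simp [mul_pow, this]; ring
  rw [h2, hf]; simp

lemma dvd_of_pb {M N : ℕ} (A : (Fin M → ℝ) →ₗ[ℝ] (Fin N → ℝ)) {φ : Module.Dual ℝ (Fin N → ℝ)}
    (hφ : φ ≠ 0) (hA : Function.Injective A) (hr : ∀ x, φ x = 0 → ∃ z, A z = x)
    {f : MvPolynomial (Fin N) ℂ} (h : pb A f = 0) : lin φ ∣ f := by
  obtain ⟨w0, hw0⟩ : ∃ w, φ w = 1 := by
    obtain ⟨w, hw⟩ : ∃ w, φ w ≠ 0 := by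
      by_contra hc; push Not at hc; exact hφ (LinearMap.ext hc)
    exact ⟨(φ w)⁻¹ • w, by simp [hw]⟩
  obtain ⟨B, hB⟩ := A.exists_leftInverse_of_injective (LinearMap.ker_eq_bot.mpr hA)
  let B' := B ∘ₗ (LinearMap.id - φ.smulRight w0)
  have hAB : ∀ x, A (B' x) = x - φ x • w0 := by
    intro x
    obtain ⟨z, hz⟩ := hr (x - φ x • w0) (by simp [hw0])
    have : B' x = z := by
      simp only [B', LinearMap.comp_apply, LinearMap.sub_apply, LinearMap.id_apply,
        LinearMap.smulRight_apply]
      rw [← hz]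
      exact DFunLike.congr_fun hB z
    rw [this, hz]
  rw [← Ideal.mem_span_singleton, ← Ideal.Quotient.eq_zero_iff_mem]
  have key : (Ideal.Quotient.mkₐ ℂ (Ideal.span {lin φ})).comp ((pb B').comp (pb A)) =
      Ideal.Quotient.mkₐ ℂ (Ideal.span {lin φ}) := by
    apply MvPolynomial.algHom_ext
    intro j
    simp only [AlgHom.comp_apply, pb_X, pb_lin]
    have : (LinearMap.proj j ∘ₗ A) ∘ₗ B' = LinearMap.proj j + (-(w0 j)) • φ := by
      refine LinearMap.ext fun x => ?_
      rw [LinearMap.comp_apply, LinearMap.comp_apply, hAB]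
      simp; ring
    rw [this, lin_add, lin_proj, lin_smul]
    simp only [Ideal.Quotient.mkₐ_eq_mk, map_add, map_mul]
    have : (Ideal.Quotient.mk (Ideal.span {lin φ})) (lin φ) = 0 := by
      rw [Ideal.Quotient.eq_zero_iff_mem]; exact Ideal.mem_span_singleton_self _
    rw [this]; simp
  have := DFunLike.congr_fun key f
  simp only [AlgHom.comp_apply, h, map_zero] at this
  simpa using this.symm

end Adj

namespace Adj

/-- the cone -/
def cone {ι : Type} {N : ℕ} (I : Finset ι) (ℓ : ι → Module.Dual ℝ (Fin N → ℝ)) :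
    Set (Fin N → ℝ) := {v | ∀ i ∈ I, 0 ≤ ℓ i v}

/-- the flat -/
def fl {ι : Type} {N : ℕ} (I : Finset ι) (ℓ : ι → Module.Dual ℝ (Fin N → ℝ))
    (v : Fin N → ℝ) : Finset ι := I.filter fun i => ℓ i v = 0

/-- points of the arrangement -/
def IsPt {ι : Type} {N : ℕ} (I : Finset ι) (ℓ : ι → Module.Dual ℝ (Fin N → ℝ))
    (v : Fin N → ℝ) : Prop :=
  v ≠ 0 ∧ ∀ w, (∀ i ∈ I, ℓ i v = 0 → ℓ i w = 0) → ∃ c : ℝ, w = c • v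

/-- the interpolation conditions -/
def T {ι : Type} {N : ℕ} (I : Finset ι) (ℓ : ι → Module.Dual ℝ (Fin N → ℝ))
    (K : Set (Fin N → ℝ)) (e : ℕ) (f : MvPolynomial (Fin N) ℂ) : Prop :=
  f.IsHomogeneous e ∧ ∀ v, IsPt I ℓ v → VanishAt f v ((fl I ℓ v).card + 1 - N) ∧
    (v ∉ K → -v ∉ K → VanishAt f v ((fl I ℓ v).card + 2 - N))

/-- spanning -/
def Sp {ι : Type} {N : ℕ} (I : Finset ι) (ℓ : ι → Module.Dual ℝ (Fin N → ℝ)) : Prop :=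
  ∀ v, (∀ i ∈ I, ℓ i v = 0) → v = 0

/-- restricted arrangement -/
def res {ι : Type} {N : ℕ} (ℓ : ι → Module.Dual ℝ (Fin (N + 1) → ℝ))
    (A : (Fin N → ℝ) →ₗ[ℝ] (Fin (N + 1) → ℝ)) (a : ι) (j : ι) : Module.Dual ℝ (Fin N → ℝ) :=
  if ℓ j ∘ₗ A = 0 then ℓ a ∘ₗ A else ℓ j ∘ₗ A

/-- parametrization of a hyperplane -/
def Par {N : ℕ} (φ : Module.Dual ℝ (Fin (N + 1) → ℝ))
    (A : (Fin N → ℝ) →ₗ[ℝ] (Fin (N + 1) → ℝ)) : Prop :=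
  Function.Injective A ∧ (∀ x, φ x = 0 → ∃ z, A z = x) ∧ ∀ z, φ (A z) = 0

lemma exists_par {N : ℕ} {φ : Module.Dual ℝ (Fin (N + 1) → ℝ)} (h : φ ≠ 0) :
    ∃ A, Par φ A := by
  have h1 : Module.finrank ℝ (LinearMap.ker φ) = N := by
    have := LinearMap.finrank_range_add_finrank_ker φ
    have h2 : LinearMap.range φ = ⊤ := LinearMap.range_eq_top.mpr (LinearMap.surjective h)
    rw [h2, finrank_top] at this
    simp at this
    omega
  have e : (Fin N → ℝ) ≃ₗ[ℝ] LinearMap.ker φ := LinearEquiv.ofFinrankEq _ _ (by simp [h1])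
  refine ⟨(LinearMap.ker φ).subtype ∘ₗ e.toLinearMap, ?_, ?_, ?_⟩
  · simp only [LinearMap.coe_comp]
    exact (Submodule.injective_subtype _).comp e.injective
  · intro x hx
    exact ⟨e.symm ⟨x, hx⟩, by simp⟩
  · intro z
    exact (e z).2

section
variable {ι : Type} {N : ℕ} {I : Finset ι} {ℓ : ι → Module.Dual ℝ (Fin (N + 1) → ℝ)}
  {A : (Fin N → ℝ) →ₗ[ℝ] (Fin (N + 1) → ℝ)} {i a : ι}

lemma exists_a (hN : 1 ≤ N) (hsp : Sp I ℓ) (hA : Par (ℓ i) A) :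
    ∃ a ∈ I, ℓ a ∘ₗ A ≠ 0 := by
  by_contra hc
  push Not at hc
  have hz : (fun _ => 1 : Fin N → ℝ) ≠ 0 := by
    intro h; have := congrFun h ⟨0, hN⟩; simp at this
  apply hz
  apply hA.1
  rw [map_zero]
  exact hsp _ fun j hj => DFunLike.congr_fun (hc j hj) _

lemma res_ne (ha : ℓ a ∘ₗ A ≠ 0) (j : ι) : res ℓ A a j ≠ 0 := by
  unfold res; split_ifs with h
  · exact ha
  · exact h

lemma res_sp (hsp : Sp I ℓ) (hA : Par (ℓ i) A) : Sp (I.erase i) (res ℓ A a) := by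
  intro z hz
  apply hA.1
  rw [map_zero]
  apply hsp
  intro j hj
  by_cases hji : j = i
  · subst hji; exact hA.2.2 z
  · have := hz j (Finset.mem_erase.mpr ⟨hji, hj⟩)
    unfold res at this
    split_ifs at this with h
    · exact DFunLike.congr_fun h z
    · exact this

lemma res_cone (haI : a ∈ I) (hA : Par (ℓ i) A) (ha : ℓ a ∘ₗ A ≠ 0) (z : Fin N → ℝ) :
    z ∈ cone (I.erase i) (res ℓ A a) ↔ A z ∈ cone I ℓ := by
  constructor
  · intro h j hj
    by_cases hji : j = i
    · subst hji; exact (hA.2.2 z).ge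
    · have := h j (Finset.mem_erase.mpr ⟨hji, hj⟩)
      unfold res at this
      split_ifs at this with h
      · exact (DFunLike.congr_fun h z).ge
      · exact this
  · intro h j hj
    unfold res
    split_ifs
    · exact h a haI
    · exact h j (Finset.mem_of_mem_erase hj)

lemma res_fl (haI : a ∈ I) (hA : Par (ℓ i) A) (z : Fin N → ℝ) :
    fl (I.erase i) (res ℓ A a) z ⊆ (fl I ℓ (A z)).erase i := by
  intro j hj
  simp only [fl, Finset.mem_filter, Finset.mem_erase] at hj ⊢
  refine ⟨hj.1.1, hj.1.2, ?_⟩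
  have := hj.2
  unfold res at this
  split_ifs at this with h
  · exact DFunLike.congr_fun h z
  · exact this

lemma res_card (hi : i ∈ I) (haI : a ∈ I) (hA : Par (ℓ i) A) (z : Fin N → ℝ) :
    (fl (I.erase i) (res ℓ A a) z).card + 1 ≤ (fl I ℓ (A z)).card := by
  have h1 := Finset.card_le_card (res_fl haI hA z)
  have h2 : i ∈ fl I ℓ (A z) := by simp [fl, hi, hA.2.2 z]
  have h3 := Finset.card_erase_add_one h2
  omega

lemma res_pt (haI : a ∈ I) (hi : i ∈ I) (hA : Par (ℓ i) A) {z : Fin N → ℝ}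
    (hz : IsPt (I.erase i) (res ℓ A a) z) : IsPt I ℓ (A z) := by
  refine ⟨fun h => hz.1 (hA.1 (by simpa using h)), ?_⟩
  intro w hw
  obtain ⟨w', rfl⟩ := hA.2.1 w (hw i hi (hA.2.2 z))
  obtain ⟨c, hc⟩ := hz.2 w' (by
    intro j hj
    unfold res
    split_ifs
    · exact hw a haI
    · exact hw j (Finset.mem_of_mem_erase hj))
  exact ⟨c, by rw [hc, map_smul]⟩

lemma res_T {K : Set (Fin (N + 1) → ℝ)} {K' : Set (Fin N → ℝ)} {e : ℕ}
    {f : MvPolynomial (Fin (N + 1)) ℂ}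
    (haI : a ∈ I) (hi : i ∈ I) (hA : Par (ℓ i) A) (hT : T I ℓ K e f)
    (hK : ∀ z, z ∉ K' → -z ∉ K' → (A z ∉ K ∧ - A z ∉ K) ∨
      (fl (I.erase i) (res ℓ A a) z).card + 2 ≤ (fl I ℓ (A z)).card) :
    T (I.erase i) (res ℓ A a) K' e (pb A f) := by
  refine ⟨pb_hom A hT.1, fun z hz => ?_⟩
  have h1 := hT.2 _ (res_pt haI hi hA hz)
  have h2 := res_card hi haI hA z
  refine ⟨vanish_mono (by omega) (vanish_pb A h1.1), fun hz1 hz2 => ?_⟩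
  rcases hK z hz1 hz2 with h | h
  · exact vanish_mono (by omega) (vanish_pb A (h1.2 h.1 h.2))
  · exact vanish_mono (by omega) (vanish_pb A h1.1)

end

section
variable {ι : Type} {N : ℕ} {I : Finset ι} {ℓ : ι → Module.Dual ℝ (Fin N → ℝ)} {i : ι}

lemma pt_erase {v : Fin N → ℝ} (h : IsPt (I.erase i) ℓ v) : IsPt I ℓ v :=
  ⟨h.1, fun w hw => h.2 w fun j hj => hw j (Finset.mem_of_mem_erase hj)⟩

lemma del_T {K : Set (Fin N → ℝ)} {e : ℕ} {g : MvPolynomial (Fin N) ℂ} (hi : i ∈ I)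
    (hne : ℓ i ≠ 0) (hT : T I ℓ K (e + 1) (lin (ℓ i) * g)) : T (I.erase i) ℓ K e g := by
  refine ⟨hom_div hne hT.1, fun v hv => ?_⟩
  have h1 := hT.2 v (pt_erase hv)
  by_cases hvi : ℓ i v = 0
  · have h2 : (fl I ℓ v).card = (fl (I.erase i) ℓ v).card + 1 := by
      have : fl (I.erase i) ℓ v = (fl I ℓ v).erase i := by
        ext j; simp [fl]; tauto
      rw [this, Finset.card_erase_add_one]
      simp [fl, hi, hvi]
    have key : ∀ s, VanishAt (lin (ℓ i) * g) v s → VanishAt g v (s - 1) := by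
      intro s hs
      rcases s with _ | s
      · simp [VanishAt]
      · exact vanish_div_of_eq hne hvi hs
    refine ⟨vanish_mono (by omega) (key _ h1.1),
      fun a b => vanish_mono (by omega) (key _ (h1.2 a b))⟩
  · have h2 : fl I ℓ v = fl (I.erase i) ℓ v := by
      ext j; simp only [fl, Finset.mem_filter, Finset.mem_erase]
      constructor
      · rintro ⟨hj, h0⟩; exact ⟨⟨fun h => hvi (h ▸ h0), hj⟩, h0⟩
      · rintro ⟨⟨_, hj⟩, h0⟩; exact ⟨hj, h0⟩
    rw [← h2]
    exact ⟨vanish_div_of_ne hvi h1.1, fun a b => vanish_div_of_ne hvi (h1.2 a b)⟩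

lemma nonsp {K : Set (Fin N → ℝ)} {e : ℕ} {g : MvPolynomial (Fin N) ℂ} (hi : i ∈ I)
    (hne : ℓ i ≠ 0) (hsp : Sp I ℓ) (hns : ¬ Sp (I.erase i) ℓ) (he : e + 1 + N = I.card)
    (hT : T I ℓ K (e + 1) (lin (ℓ i) * g)) : g = 0 := by
  unfold Sp at hns
  push Not at hns
  obtain ⟨v, hv, hv0⟩ := hns
  have hvi : ℓ i v ≠ 0 := by
    intro h
    apply hv0
    apply hsp
    intro j hj
    by_cases hji : j = i
    · rw [hji, h]
    · exact hv j (Finset.mem_erase.mpr ⟨hji, hj⟩)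
  have hpt : IsPt I ℓ v := by
    refine ⟨hv0, fun w hw => ⟨ℓ i w / ℓ i v, ?_⟩⟩
    rw [← sub_eq_zero]
    apply hsp
    intro j hj
    by_cases hji : j = i
    · subst hji; simp [hvi]
    · have h0 := hv j (Finset.mem_erase.mpr ⟨hji, hj⟩)
      simp [h0, hw j hj h0]
  have hfl : fl I ℓ v = I.erase i := by
    ext j; simp only [fl, Finset.mem_filter, Finset.mem_erase]
    constructor
    · rintro ⟨hj, h0⟩; exact ⟨fun h => hvi (h ▸ h0), hj⟩
    · rintro ⟨h1, hj⟩; exact ⟨hj, hv j (Finset.mem_erase.mpr ⟨h1, hj⟩)⟩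
  have h1 := (hT.2 v hpt).1
  rw [hfl] at h1
  have h2 := Finset.card_erase_add_one hi
  have h3 := vanish_div_of_ne hvi h1
  exact eq_zero_of_vanish (hom_div hne hT.1) (by omega) h3

/-- a convex-geometry move -/
lemma move {w u : Fin N → ℝ} (hw : w ∈ cone I ℓ) {b : ι} (hb : b ∈ I) (hu : ℓ b u < 0) :
    ∃ t : ℝ, 0 ≤ t ∧ w + t • u ∈ cone I ℓ ∧ ∃ j ∈ I, ℓ j (w + t • u) = 0 := by
  have hS : (I.filter fun j => ℓ j u < 0).Nonempty := ⟨b, by simp [hb, hu]⟩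
  obtain ⟨j, hj, hmin⟩ := Finset.exists_min_image _ (fun j => ℓ j w / (- ℓ j u)) hS
  simp only [Finset.mem_filter] at hj hmin
  refine ⟨ℓ j w / (- ℓ j u), div_nonneg (hw j hj.1) (by linarith), ?_, j, hj.1, ?_⟩
  · intro k hk
    simp only [map_add, map_smul, smul_eq_mul]
    have ht : 0 ≤ ℓ j w / (- ℓ j u) := div_nonneg (hw j hj.1) (by linarith)
    by_cases hku : ℓ k u < 0
    · have h1 := hmin k ⟨hk, hku⟩
      rw [le_div_iff₀ (by linarith)] at h1
      linarith
    · have := hw k hk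
      have := mul_nonneg ht (not_lt.mp hku)
      linarith
  · have : ℓ j u ≠ 0 := by linarith [hj.2]
    simp; field_simp; ring

lemma exists_ab (hN : 2 ≤ N) (hsp : Sp I ℓ) :
    ∃ a ∈ I, ∃ b ∈ I, ∃ x, ℓ a x = 0 ∧ ℓ b x ≠ 0 := by
  have hI : I.Nonempty := by
    by_contra hc
    rw [Finset.not_nonempty_iff_eq_empty] at hc
    have := hsp (fun _ => 1) (by simp [hc])
    have := congrFun this ⟨0, by omega⟩
    simp at this
  obtain ⟨a, ha⟩ := hI
  have : ∃ x, x ≠ 0 ∧ ℓ a x = 0 := by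
    by_contra hc
    push Not at hc
    have hinj : Function.Injective (ℓ a) := by
      rw [← LinearMap.ker_eq_bot, LinearMap.ker_eq_bot']
      intro m hm
      by_contra h
      exact hc m h hm
    have := LinearMap.finrank_le_finrank_of_injective hinj
    simp at this
    omega
  obtain ⟨x, hx, hax⟩ := this
  have : ∃ b ∈ I, ℓ b x ≠ 0 := by
    by_contra hc
    push Not at hc
    exact hx (hsp x hc)
  obtain ⟨b, hb, hbx⟩ := this
  exact ⟨a, ha, b, hb, x, hax, hbx⟩

lemma find_bad {K : Set (Fin N → ℝ)} (hN : 2 ≤ N) (hne : ∀ i ∈ I, ℓ i ≠ 0) (hsp : Sp I ℓ)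
    (hK : Convex ℝ K) (hbad : ¬ (cone I ℓ ⊆ K ∧ Submodule.span ℝ (cone I ℓ) = ⊤)) :
    ∃ i ∈ I, (∃ w ∈ cone I ℓ, ℓ i w = 0 ∧ w ∉ K) ∨
      ¬ (∀ x, ℓ i x = 0 → x ∈ Submodule.span ℝ {w | w ∈ cone I ℓ ∧ ℓ i w = 0}) := by
  obtain ⟨a, ha, b, hb, x, hax, hbx⟩ := exists_ab hN hsp
  by_cases hsub : cone I ℓ ⊆ K
  · by_contra hc
    push Not at hc
    apply hbad
    refine ⟨hsub, ?_⟩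
    rw [eq_top_iff]
    have hker : ∀ i ∈ I, ∀ y, ℓ i y = 0 → y ∈ Submodule.span ℝ (cone I ℓ) := by
      intro i hi y hy
      exact Submodule.span_mono (fun z hz => hz.1) ((hc i hi).2 y hy)
    intro z _
    have h1 := hker a ha x hax
    have h2 := hker b hb (z - (ℓ b z / ℓ b x) • x) (by simp [hbx])
    have := Submodule.add_mem _ h2 (Submodule.smul_mem _ (ℓ b z / ℓ b x) h1)
    simpa using this
  · obtain ⟨w, hw, hwK⟩ := Set.not_subset.mp hsub
    obtain ⟨y, hy⟩ : ∃ y, ℓ a y = 1 := by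
      obtain ⟨w, hw⟩ : ∃ w, ℓ a w ≠ 0 := by
        by_contra hc; push Not at hc; exact hne a ha (LinearMap.ext hc)
      exact ⟨(ℓ a w)⁻¹ • w, by simp [hw]⟩
    let u := y + ((-1 - ℓ b y) / ℓ b x) • x
    have hau : ℓ a u = 1 := by simp [u, hy, hax]
    have hbu : ℓ b u = -1 := by simp [u, hbx]
    obtain ⟨t, ht, htc, j, hj, hj0⟩ := move hw hb (by rw [hbu]; norm_num : ℓ b u < 0)
    obtain ⟨s, hs, hsc, k, hk, hk0⟩ := move hw ha (by simp [hau] : ℓ a (-u) < 0)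
    by_cases h1 : w + t • u ∈ K
    · by_cases h2 : w + s • (-u) ∈ K
      · exfalso
        apply hwK
        by_cases hst : t + s = 0
        · have : t = 0 := by linarith
          simpa [this] using h1
        · have hpos : 0 < t + s := lt_of_le_of_ne (by linarith) (Ne.symm hst)
          have := hK h1 h2 (div_nonneg hs hpos.le) (div_nonneg ht hpos.le) (by field_simp; ring)
          convert this using 1
          ext m
          simp
          field_simp
          ring
      · exact ⟨k, hk, Or.inl ⟨_, hsc, hk0, h2⟩⟩
    · exact ⟨j, hj, Or.inl ⟨_, htc, hj0, h1⟩⟩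

lemma cone_pointed (hsp : Sp I ℓ) {v : Fin N → ℝ} (h1 : v ∈ cone I ℓ) (h2 : -v ∈ cone I ℓ) :
    v = 0 := hsp v fun i hi => by
  have := h1 i hi
  have := h2 i hi
  simp at this
  linarith

lemma cone_erase : cone I ℓ ⊆ cone (I.erase i) ℓ :=
  fun _ hv j hj => hv j (Finset.mem_of_mem_erase hj)

lemma cone_convex : Convex ℝ (cone I ℓ) := by
  intro x hx y hy a b ha hb _ i hi
  have h1 := mul_nonneg ha (hx i hi)
  have h2 := mul_nonneg hb (hy i hi)
  simp; linarith

end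

lemma base {ι : Type} {I : Finset ι} {ℓ : ι → Module.Dual ℝ (Fin 1 → ℝ)}
    {K : Set (Fin 1 → ℝ)} {e : ℕ} {f : MvPolynomial (Fin 1) ℂ}
    (hsp : Sp I ℓ) (h0 : 0 ∈ K) (hKc : K ⊆ cone I ℓ)
    (hbad : ¬ (cone I ℓ ⊆ K ∧ Submodule.span ℝ (cone I ℓ) = ⊤))
    (hT : T I ℓ K e f) : f = 0 := by
  have hmul : ∀ w x : Fin 1 → ℝ, w ≠ 0 → ∃ c : ℝ, x = c • w := by
    intro w x hw
    have hw0 : w 0 ≠ 0 := by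
      intro h0; apply hw; ext i; fin_cases i; simpa using h0
    refine ⟨x 0 / w 0, ?_⟩
    ext i; fin_cases i; simp [hw0]
  have : ∃ w, w ≠ 0 ∧ w ∉ K ∧ -w ∉ K := by
    by_cases hsub : cone I ℓ ⊆ K
    · have hz : ∀ w ∈ cone I ℓ, w = 0 := by
        intro w hw
        by_contra hw0
        apply hbad
        refine ⟨hsub, ?_⟩
        rw [eq_top_iff]
        intro x _
        obtain ⟨c, rfl⟩ := hmul w x hw0
        exact Submodule.smul_mem _ _ (Submodule.subset_span hw)
      have h1 : (fun _ => 1 : Fin 1 → ℝ) ≠ 0 := by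
        intro h; have := congrFun h 0; simp at this
      exact ⟨fun _ => 1, h1, fun h => h1 (hz _ (hKc h)),
        fun h => h1 (neg_eq_zero.mp (hz _ (hKc h)))⟩
    · obtain ⟨w, hw, hwK⟩ := Set.not_subset.mp hsub
      have hw0 : w ≠ 0 := fun h => hwK (h ▸ h0)
      exact ⟨w, hw0, hwK, fun h => hw0 (cone_pointed hsp hw (hKc h))⟩
  obtain ⟨w, hw0, h1, h2⟩ := this
  have := (hT.2 w ⟨hw0, fun x _ => hmul w x hw0⟩).2 h1 h2
  exact hom_one_var hT.1 hw0 (eval_of_vanish (by omega) this)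

/-- the vanishing statement for arrangements of given size -/
def MLs (ι : Type) (k : ℕ) : Prop :=
  ∀ (N : ℕ) (I : Finset ι) (ℓ : ι → Module.Dual ℝ (Fin (N + 1) → ℝ)) (K : Set (Fin (N + 1) → ℝ))
    (e : ℕ) (f : MvPolynomial (Fin (N + 1)) ℂ), I.card = k → (∀ i ∈ I, ℓ i ≠ 0) → Sp I ℓ →
    Convex ℝ K → 0 ∈ K → K ⊆ cone I ℓ →
    ¬ (cone I ℓ ⊆ K ∧ Submodule.span ℝ (cone I ℓ) = ⊤) → e + (N + 1) = I.card →
    T I ℓ K e f → f = 0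

lemma ml_step {ι : Type} {k N : ℕ} (ih : MLs ι k) {I : Finset ι}
    {ℓ : ι → Module.Dual ℝ (Fin (N + 1) → ℝ)}
    {K : Set (Fin (N + 1) → ℝ)} {e : ℕ} {f : MvPolynomial (Fin (N + 1)) ℂ} {i : ι}
    (hk : I.card = k + 1) (hne : ∀ i ∈ I, ℓ i ≠ 0) (hsp : Sp I ℓ)
    (hK : Convex ℝ K) (h0 : 0 ∈ K) (hKc : K ⊆ cone I ℓ)
    (he : e + (N + 1) = I.card) (hT : T I ℓ K e f) (hi : i ∈ I) (hd : lin (ℓ i) ∣ f)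
    (hbad : ¬ (cone (I.erase i) ℓ ⊆ K ∧ Submodule.span ℝ (cone (I.erase i) ℓ) = ⊤)) :
    f = 0 := by
  obtain ⟨g, rfl⟩ := hd
  rcases e with _ | e
  · exact hom_div_zero hT.1
  · have hg : g = 0 := by
      by_cases hs : Sp (I.erase i) ℓ
      · have hc := Finset.card_erase_add_one hi
        exact ih N (I.erase i) ℓ K e g (by omega)
          (fun j hj => hne j (Finset.mem_of_mem_erase hj)) hs hK h0
          (hKc.trans cone_erase) hbad (by omega) (del_T hi (hne i hi) hT)
      · exact nonsp hi (hne i hi) hsp hs he hT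
    rw [hg, mul_zero]

lemma ML (ι : Type) (k : ℕ) : MLs ι k := by
  induction k with
  | zero =>
    intro N I ℓ K e f hk _ _ _ _ _ _ he _
    omega
  | succ k ih =>
    intro N I ℓ K e f hk hne hsp hK h0 hKc hbad he hT
    rcases N with _ | N
    · exact base hsp h0 hKc hbad hT
    · obtain ⟨i, hi, hbi⟩ := find_bad (by omega) hne hsp hK hbad
      obtain ⟨A, hA⟩ := exists_par (hne i hi)
      obtain ⟨a, haI, ha⟩ := exists_a (by omega) hsp hA
      have hc := Finset.card_erase_add_one hi
      have hpb : pb A f = 0 := by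
        refine ih N (I.erase i) (res ℓ A a) (A ⁻¹' K) e (pb A f) (by omega)
          (fun j _ => res_ne ha j) (res_sp hsp hA) (hK.linear_preimage A) (by simpa using h0)
          (fun z hz => (res_cone haI hA ha z).mpr (hKc hz)) ?_ (by omega)
          (res_T haI hi hA hT fun z h1 h2 => Or.inl ⟨h1, by simpa using h2⟩)
        rintro ⟨hb1, hb2⟩
        rcases hbi with ⟨w, hw, hw0, hwK⟩ | hns
        · obtain ⟨z, rfl⟩ := hA.2.1 w hw0
          exact hwK (hb1 ((res_cone haI hA ha z).mpr hw))
        · apply hns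
          intro x hx
          obtain ⟨z, rfl⟩ := hA.2.1 x hx
          have hz : z ∈ Submodule.span ℝ (cone (I.erase i) (res ℓ A a)) := by rw [hb2]; trivial
          have := Submodule.mem_map_of_mem (f := A) hz
          rw [Submodule.map_span] at this
          refine Submodule.span_mono ?_ this
          rintro _ ⟨y, hy, rfl⟩
          exact ⟨(res_cone haI hA ha y).mp hy, hA.2.2 y⟩
      have hd := dvd_of_pb A (hne i hi) hA.1 hA.2.1 hpb
      refine ml_step ih hk hne hsp hK h0 hKc he hT hi hd ?_
      rintro ⟨hb1, hb2⟩
      have heq : cone (I.erase i) ℓ = cone I ℓ :=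
        Set.Subset.antisymm (hb1.trans hKc) cone_erase
      rw [heq] at hb1 hb2
      exact hbad ⟨hb1, hb2⟩

lemma T_comb {ι : Type} {N : ℕ} {I : Finset ι} {ℓ : ι → Module.Dual ℝ (Fin N → ℝ)}
    {K : Set (Fin N → ℝ)} {e : ℕ} {f g : MvPolynomial (Fin N) ℂ} (hf : T I ℓ K e f)
    (hg : T I ℓ K e g) (a b : ℂ) : T I ℓ K e (C a * f + C b * g) := by
  have key : ∀ v s, VanishAt f v s → VanishAt g v s → VanishAt (C a * f + C b * g) v s := by
    intro v s h1 h2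
    unfold VanishAt at *
    rw [map_add, map_mul, map_mul]
    exact dvd_add (Dvd.dvd.mul_left h1 _) (Dvd.dvd.mul_left h2 _)
  refine ⟨(hf.1.C_mul a).add (hg.1.C_mul b), fun v hv => ⟨key _ _ (hf.2 v hv).1 (hg.2 v hv).1,
    fun h1 h2 => key _ _ ((hf.2 v hv).2 h1 h2) ((hg.2 v hv).2 h1 h2)⟩⟩

lemma redundant {ι : Type} {N : ℕ} {I : Finset ι} {ℓ : ι → Module.Dual ℝ (Fin (N + 2) → ℝ)}
    {e : ℕ} {f : MvPolynomial (Fin (N + 2)) ℂ} {i : ι} (hne : ∀ i ∈ I, ℓ i ≠ 0) (hsp : Sp I ℓ)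
    (he : e + (N + 2) = I.card) (hT : T I ℓ (cone I ℓ) e f) (hi : i ∈ I)
    (hred : cone (I.erase i) ℓ ⊆ cone I ℓ) : lin (ℓ i) ∣ f := by
  obtain ⟨A, hA⟩ := exists_par (hne i hi)
  obtain ⟨a, haI, ha⟩ := exists_a (by omega) hsp hA
  have hc := Finset.card_erase_add_one hi
  refine dvd_of_pb A (hne i hi) hA.1 hA.2.1 ?_
  by_cases hdup : ∃ j ∈ I, j ≠ i ∧ ℓ j ∘ₗ A = 0
  · obtain ⟨j, hj, hji, hjA⟩ := hdup
    refine ML ι _ N (I.erase i) (res ℓ A a) (A ⁻¹' (cone I ℓ) ∩ {z | ℓ a (A z) = 0}) e (pb A f) rfl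
      (fun j _ => res_ne ha j) (res_sp hsp hA) ?_ ⟨by simp [cone], by simp⟩
      (fun z hz => (res_cone haI hA ha z).mpr hz.1) ?_ (by omega)
      (res_T haI hi hA hT ?_)
    · apply (cone_convex.linear_preimage A).inter
      intro x hx y hy a b ha hb _
      simp only [Set.mem_setOf_eq] at hx hy ⊢
      simp [hx, hy]
    · rintro ⟨hb1, hb2⟩
      apply ha
      refine LinearMap.ext fun z => ?_
      have hz : z ∈ Submodule.span ℝ (cone (I.erase i) (res ℓ A a)) := by rw [hb2]; trivial
      have hle : Submodule.span ℝ (cone (I.erase i) (res ℓ A a)) ≤ LinearMap.ker (ℓ a ∘ₗ A) := by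
        rw [Submodule.span_le]
        intro y hy
        exact (hb1 hy).2
      exact hle hz
    · intro z h1 h2
      by_cases hz : ℓ a (A z) = 0
      · left
        refine ⟨fun h => h1 ⟨h, hz⟩, fun h => h2 ⟨?_, by simp [hz]⟩⟩
        simpa using h
      · right
        have hsub : fl (I.erase i) (res ℓ A a) z ⊆ ((fl I ℓ (A z)).erase i).erase j := by
          intro m hm
          refine Finset.mem_erase.mpr ⟨?_, res_fl haI hA z hm⟩
          rintro rfl
          have := (Finset.mem_filter.mp hm).2
          unfold res at this
          rw [if_pos hjA] at this
          exact hz this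
        have h3 := Finset.card_le_card hsub
        have h4 : i ∈ fl I ℓ (A z) := by simp [fl, hi, hA.2.2 z]
        have h5 : j ∈ (fl I ℓ (A z)).erase i := by
          refine Finset.mem_erase.mpr ⟨hji, Finset.mem_filter.mpr ⟨hj, ?_⟩⟩
          exact DFunLike.congr_fun hjA z
        have := Finset.card_erase_add_one h4
        have := Finset.card_erase_add_one h5
        omega
  · push Not at hdup
    refine ML ι _ N (I.erase i) (res ℓ A a) (A ⁻¹' (cone I ℓ)) e (pb A f) rfl
      (fun j _ => res_ne ha j) (res_sp hsp hA) (cone_convex.linear_preimage A) (by simp [cone])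
      (fun z hz => (res_cone haI hA ha z).mpr hz) ?_ (by omega)
      (res_T haI hi hA hT fun z h1 h2 => Or.inl ⟨h1, by simpa using h2⟩)
    rintro ⟨-, hb2⟩
    -- a point of the facet positive on all others
    have hpos : ∀ j ∈ I.erase i, ∃ z, A z ∈ cone I ℓ ∧ 0 < ℓ j (A z) := by
      intro j hj
      by_contra hcon
      push Not at hcon
      apply hdup j (Finset.mem_of_mem_erase hj) (Finset.ne_of_mem_erase hj)
      refine LinearMap.ext fun z => ?_
      have hz : z ∈ Submodule.span ℝ (cone (I.erase i) (res ℓ A a)) := by rw [hb2]; trivial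
      have hle : Submodule.span ℝ (cone (I.erase i) (res ℓ A a)) ≤ LinearMap.ker (ℓ j ∘ₗ A) := by
        rw [Submodule.span_le]
        intro y hy
        have hy' := (res_cone haI hA ha y).mp hy
        exact le_antisymm (hcon y hy') (hy' j (Finset.mem_of_mem_erase hj))
      exact hle hz
    choose! z hz1 hz2 using hpos
    let p := ∑ j ∈ I.erase i, z j
    have hp : ∀ j ∈ I.erase i, 0 < ℓ j (A p) := by
      intro j hj
      simp only [p, map_sum]
      exact Finset.sum_pos' (fun m hm => hz1 m hm j (Finset.mem_of_mem_erase hj))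
        ⟨j, hj, hz2 j hj⟩
    obtain ⟨u, hu⟩ : ∃ u, ℓ i u = -1 := by
      obtain ⟨w, hw⟩ : ∃ w, ℓ i w ≠ 0 := by
        by_contra hc; push Not at hc; exact hne i hi (LinearMap.ext hc)
      exact ⟨-(ℓ i w)⁻¹ • w, by simp [hw]⟩
    obtain ⟨M, hM⟩ : ∃ M : ℝ, ∀ j ∈ I.erase i, - ℓ j u / ℓ j (A p) ≤ M := by
      obtain ⟨M, hM⟩ := (I.erase i).finite_toSet.image (fun j => - ℓ j u / ℓ j (A p)) |>.bddAbove
      exact ⟨M, fun j hj => hM ⟨j, hj, rfl⟩⟩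
    have hq : M • A p + u ∈ cone (I.erase i) ℓ := by
      intro j hj
      have h1 := hM j hj
      rw [div_le_iff₀ (hp j hj)] at h1
      simp; linarith
    have := hred hq i hi
    simp [hA.2.2, hu] at this
    linarith

lemma uniq (ι : Type) (k : ℕ) : ∀ (N : ℕ) (I : Finset ι)
    (ℓ : ι → Module.Dual ℝ (Fin (N + 1) → ℝ)) (e : ℕ) (f g : MvPolynomial (Fin (N + 1)) ℂ),
    I.card = k → (∀ i ∈ I, ℓ i ≠ 0) → Sp I ℓ → e + (N + 1) = I.card →
    T I ℓ (cone I ℓ) e f → T I ℓ (cone I ℓ) e g →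
    ∃ a b : ℂ, (a ≠ 0 ∨ b ≠ 0) ∧ C a * f + C b * g = 0 := by
  induction k with
  | zero =>
    intro N I ℓ e f g hk _ _ he
    omega
  | succ k ih =>
    intro N I ℓ e f g hk hne hsp he hf hg
    rcases N with _ | N
    · have h1 : (fun _ => 1 : Fin 1 → ℝ) ≠ 0 := by
        intro h; have := congrFun h 0; simp at this
      by_cases hf0 : f = 0
      · exact ⟨1, 0, by simp, by simp [hf0]⟩
      refine ⟨eval (fun i => ((1 : ℝ) : ℂ)) g, - eval (fun i => ((1 : ℝ) : ℂ)) f, ?_, ?_⟩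
      · right
        intro h
        exact hf0 (hom_one_var hf.1 h1 (neg_eq_zero.mp h))
      · apply hom_one_var (T_comb hf hg _ _).1 h1
        simp; ring
    · obtain ⟨i, hi⟩ : I.Nonempty := Finset.card_pos.mp (by omega)
      have hc := Finset.card_erase_add_one hi
      by_cases hred : cone (I.erase i) ℓ ⊆ cone I ℓ
      · obtain ⟨f', rfl⟩ := redundant hne hsp he hf hi hred
        obtain ⟨g', rfl⟩ := redundant hne hsp he hg hi hred
        rcases e with _ | e
        · exact ⟨1, 0, by simp, by rw [hom_div_zero hf.1]; simp⟩
        have heq : cone (I.erase i) ℓ = cone I ℓ := Set.Subset.antisymm hred cone_erase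
        have hs : Sp (I.erase i) ℓ := by
          intro v hv
          apply cone_pointed hsp <;> apply hred <;> intro j hj <;> simp [hv j hj]
        obtain ⟨a, b, hab, h0⟩ := ih (N + 1) (I.erase i) ℓ e f' g' (by omega)
          (fun j hj => hne j (Finset.mem_of_mem_erase hj)) hs (by omega)
          (by rw [heq]; exact del_T hi (hne i hi) hf) (by rw [heq]; exact del_T hi (hne i hi) hg)
        refine ⟨a, b, hab, ?_⟩
        have : C a * (lin (ℓ i) * f') + C b * (lin (ℓ i) * g') =
          lin (ℓ i) * (C a * f' + C b * g') := by ring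
        rw [this, h0, mul_zero]
      · obtain ⟨A, hA⟩ := exists_par (hne i hi)
        obtain ⟨a, haI, ha⟩ := exists_a (by omega) hsp hA
        have hcc : cone (I.erase i) (res ℓ A a) = A ⁻¹' cone I ℓ := by
          ext z; exact res_cone haI hA ha z
        have hr : ∀ h, T I ℓ (cone I ℓ) e h →
            T (I.erase i) (res ℓ A a) (cone (I.erase i) (res ℓ A a)) e (pb A h) := by
          intro h hh
          refine res_T haI hi hA hh fun z h1 h2 => Or.inl ?_
          rw [hcc] at h1 h2
          exact ⟨h1, by simpa using h2⟩
        obtain ⟨x, y, hxy, h0⟩ := ih N (I.erase i) (res ℓ A a) e (pb A f) (pb A g) (by omega)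
          (fun j _ => res_ne ha j) (res_sp hsp hA) (by omega) (hr f hf) (hr g hg)
        refine ⟨x, y, hxy, ?_⟩
        have hTc := T_comb hf hg x y
        have hpb : pb A (C x * f + C y * g) = 0 := by
          rw [← h0]; simp [pb]
        exact ml_step (ML ι k) hk hne hsp cone_convex (by simp [cone]) (le_refl _) he hTc hi
          (dvd_of_pb A (hne i hi) hA.1 hA.2.1 hpb) (fun h => hred h.1)

end Adj

namespace Adj

section exist

variable {n d : ℕ} {φ : Fin d → Module.Dual ℝ (Fin (n + 1) → ℝ)}

/-- matrix of a tuple -/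
def Mt (φ : Fin d → Module.Dual ℝ (Fin (n + 1) → ℝ)) (b : Fin (n + 1) → Fin d) :
    Matrix (Fin (n + 1)) (Fin (n + 1)) ℝ := Matrix.of fun r c => φ (b r) (Pi.single c 1)

lemma Mt_mulVec (b : Fin (n + 1) → Fin d) (v : Fin (n + 1) → ℝ) (r : Fin (n + 1)) :
    (Mt φ b).mulVec v r = φ (b r) v := by
  rw [dual_apply (φ (b r)) v]
  simp [Mt, Matrix.mulVec, dotProduct]

lemma Mt_ker {b : Fin (n + 1) → Fin d} (hb : (Mt φ b).det ≠ 0) {v : Fin (n + 1) → ℝ}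
    (h : ∀ r, φ (b r) v = 0) : v = 0 := by
  by_contra hv
  exact hb (Matrix.exists_mulVec_eq_zero_iff.1 ⟨v, hv, funext fun r => by
    rw [Mt_mulVec, h r]; rfl⟩)

lemma Mt_inj {b : Fin (n + 1) → Fin d} (hb : (Mt φ b).det ≠ 0) : Function.Injective b := by
  intro i j hij
  by_contra hne
  exact hb (Matrix.det_zero_of_row_eq hne (by funext c; simp [Mt, hij]))

/-- feasible tuple -/
def Feas (φ : Fin d → Module.Dual ℝ (Fin (n + 1) → ℝ)) (h : Fin d → ℝ)
    (b : Fin (n + 1) → Fin d) : Prop :=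
  ∃ u, (∀ r, φ (b r) u = h (b r)) ∧ ∀ j, φ j u ≤ h j

/-- weight -/
def wt (φ : Fin d → Module.Dual ℝ (Fin (n + 1) → ℝ)) (h : Fin d → ℝ)
    (b : Fin (n + 1) → Fin d) : ℝ := if Feas φ h b then |(Mt φ b).det| else 0

/-- summand -/
def term (φ : Fin d → Module.Dual ℝ (Fin (n + 1) → ℝ)) (h : Fin d → ℝ)
    (b : Fin (n + 1) → Fin d) : MvPolynomial (Fin (n + 1)) ℂ :=
  C (wt φ h b : ℂ) * ∏ i ∈ univ \ image b univ, lin (φ i)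

/-- the adjoint -/
def adj (φ : Fin d → Module.Dual ℝ (Fin (n + 1) → ℝ)) (h : Fin d → ℝ) :
    MvPolynomial (Fin (n + 1)) ℂ := ∑ b, term φ h b

/-- genericity -/
def Gen (φ : Fin d → Module.Dual ℝ (Fin (n + 1) → ℝ)) (h : Fin d → ℝ) : Prop :=
  ∀ b, (Mt φ b).det ≠ 0 → ∀ u, (∀ r, φ (b r) u = h (b r)) → ∀ j, φ j u = h j → ∃ r, b r = j

lemma wt_ne {h : Fin d → ℝ} {b : Fin (n + 1) → Fin d} (hw : wt φ h b ≠ 0) :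
    Feas φ h b ∧ (Mt φ b).det ≠ 0 := by
  unfold wt at hw
  split_ifs at hw with h1
  · exact ⟨h1, by simpa using hw⟩
  · exact absurd rfl hw

lemma adj_hom (h : Fin d → ℝ) : (adj φ h).IsHomogeneous (d - n - 1) := by
  apply IsHomogeneous.sum
  intro b _
  by_cases hw : wt φ h b = 0
  · simp [term, hw, isHomogeneous_zero]
  · have hi := Mt_inj (wt_ne hw).2
    have h1 : (∏ i ∈ univ \ image b univ, lin (φ i)).IsHomogeneous
        (∑ i ∈ univ \ image b univ, 1) := IsHomogeneous.prod _ _ _ fun i _ => lin_hom _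
    have h2 : ∑ i ∈ univ \ image b univ, 1 = d - n - 1 := by
      rw [← Finset.card_eq_sum_ones, Finset.card_sdiff_of_subset (Finset.subset_univ _),
        Finset.card_image_of_injective _ hi]
      simp; omega
    rw [h2] at h1
    have := (isHomogeneous_C (Fin (n + 1)) (wt φ h b : ℂ)).mul h1
    simpa [term] using this

lemma adj_eval (h : Fin d → ℝ) (x : Fin (n + 1) → ℝ) :
    eval (fun i => (x i : ℂ)) (adj φ h) =
      ((∑ b, wt φ h b * ∏ i ∈ univ \ image b univ, φ i x : ℝ) : ℂ) := by
  simp [adj, term, lin_eval, map_sum, map_prod]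

lemma wt_nonneg (h : Fin d → ℝ) (b : Fin (n + 1) → Fin d) : 0 ≤ wt φ h b := by
  unfold wt; split_ifs <;> simp

lemma adj_ne {h : Fin d → ℝ} {x : Fin (n + 1) → ℝ} (hx : ∀ i, 0 < φ i x)
    {b0 : Fin (n + 1) → Fin d} (hb0 : (Mt φ b0).det ≠ 0) (hf : Feas φ h b0) : adj φ h ≠ 0 := by
  intro h0
  have h1 := adj_eval (φ := φ) h x
  rw [h0, map_zero] at h1
  have h2 : ∑ b, wt φ h b * ∏ i ∈ univ \ image b univ, φ i x = 0 := by exact_mod_cast h1.symm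
  have h3 : 0 < ∑ b, wt φ h b * ∏ i ∈ univ \ image b univ, φ i x := by
    apply Finset.sum_pos'
    · intro b _
      exact mul_nonneg (wt_nonneg _ _) (Finset.prod_nonneg fun i _ => (hx i).le)
    · refine ⟨b0, Finset.mem_univ _, mul_pos ?_ (Finset.prod_pos fun i _ => hx i)⟩
      simp [wt, hf, hb0]
  linarith

lemma lin_mem {N : ℕ} {ψ : Module.Dual ℝ (Fin (N + 1) → ℝ)} {v : Fin (N + 1) → ℝ}
    (h : ψ v = 0) : lin ψ ∈ pointIdealC v :=
  Ideal.subset_span ⟨lin_hom ψ, by rw [lin_eval, h]; simp⟩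

lemma prod_mem {v : Fin (n + 1) → ℝ} (J : Finset (Fin d)) {s : ℕ}
    (hs : s ≤ (J.filter fun i => φ i v = 0).card) :
    ∏ i ∈ J, lin (φ i) ∈ pointIdealC v ^ s := by
  rw [← Finset.prod_filter_mul_prod_filter_not J (fun i => φ i v = 0)]
  apply Ideal.mul_mem_right
  apply Ideal.pow_le_pow_right hs
  rw [← Finset.prod_const]
  exact Ideal.prod_mem_prod fun i hi => lin_mem (Finset.mem_filter.1 hi).2

lemma card_J {v : Fin (n + 1) → ℝ} (b : Fin (n + 1) → Fin d) :
    (fl univ φ v).card ≤ ((univ \ image b univ).filter fun i => φ i v = 0).card +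
      (univ.filter fun r => φ (b r) v = 0).card := by
  have : fl univ φ v ⊆ ((univ \ image b univ).filter fun i => φ i v = 0) ∪
      (univ.filter fun r => φ (b r) v = 0).image b := by
    intro i hi
    simp only [fl, mem_filter, mem_univ, true_and, mem_union, mem_sdiff, mem_image, not_exists] at *
    by_cases hc : ∃ r, b r = i
    · obtain ⟨r, rfl⟩ := hc
      exact Or.inr ⟨r, hi, rfl⟩
    · push Not at hc
      exact Or.inl ⟨hc, hi⟩
  calc _ ≤ _ := Finset.card_le_card this
    _ ≤ _ := Finset.card_union_le _ _
    _ ≤ _ := by gcongr; exact Finset.card_image_le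

lemma card_R {v : Fin (n + 1) → ℝ} (hv : v ≠ 0) {b : Fin (n + 1) → Fin d}
    (hb : (Mt φ b).det ≠ 0) : ∃ p, φ (b p) v ≠ 0 := by
  by_contra hc
  push Not at hc
  exact hv (Mt_ker hb hc)

lemma card_R1 {v : Fin (n + 1) → ℝ} {b : Fin (n + 1) → Fin d} {p : Fin (n + 1)}
    (hp : φ (b p) v ≠ 0) : (univ.filter fun r => φ (b r) v = 0).card ≤ n := by
  have : (univ.filter fun r => φ (b r) v = 0) ⊆ univ.erase p := by
    intro r hr
    simp only [mem_filter, mem_univ, true_and, mem_erase, and_true] at *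
    rintro rfl; exact hp hr
  have := Finset.card_le_card this
  simpa using this

lemma card_R2 {v : Fin (n + 1) → ℝ} {b : Fin (n + 1) → Fin d} {p q : Fin (n + 1)} (hpq : q ≠ p)
    (hp : φ (b p) v ≠ 0) (hq : φ (b q) v ≠ 0) :
    (univ.filter fun r => φ (b r) v = 0).card + 1 ≤ n := by
  have : (univ.filter fun r => φ (b r) v = 0) ⊆ (univ.erase p).erase q := by
    intro r hr
    simp only [mem_filter, mem_univ, true_and, mem_erase, and_true] at *
    constructor <;> (rintro rfl; contradiction)
  have := Finset.card_le_card this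
  rw [Finset.card_erase_of_mem (by simp [hpq]), Finset.card_erase_of_mem (by simp)] at this
  have h3 : 2 ≤ n + 1 := by
    have := Finset.card_le_univ ({p, q} : Finset (Fin (n + 1)))
    rw [Finset.card_pair hpq.symm] at this
    simpa using this
  simp at this
  omega

lemma adj_mem1 {v : Fin (n + 1) → ℝ} (hv : v ≠ 0) (h : Fin d → ℝ) :
    adj φ h ∈ pointIdealC v ^ ((fl univ φ v).card - n) := by
  apply Ideal.sum_mem
  intro b _
  by_cases hw : wt φ h b = 0
  · simp [term, hw]
  · apply Ideal.mul_mem_left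
    apply prod_mem
    obtain ⟨p, hp⟩ := card_R hv (wt_ne hw).2
    have h1 := card_J (φ := φ) (v := v) b
    have h2 := card_R1 hp
    omega

lemma partner_exists {v : Fin (n + 1) → ℝ} {h : Fin d → ℝ} {b : Fin (n + 1) → Fin d}
    {p : Fin (n + 1)} (hf : Feas φ h b) (hr : ∀ r, r ≠ p → φ (b r) v = 0)
    (hk : ∃ k, φ k v * φ (b p) v < 0) :
    ∃ k, φ k v * φ (b p) v < 0 ∧ Feas φ h (Function.update b p k) := by
  obtain ⟨u, hu1, hu2⟩ := hf
  obtain ⟨k0, hk0⟩ := hk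
  have hS : (univ.filter fun k => φ k v * φ (b p) v < 0).Nonempty := ⟨k0, by simp [hk0]⟩
  obtain ⟨k, hkS, hmin⟩ := Finset.exists_min_image _
    (fun k => (h k - φ k u) / (- (φ k v * φ (b p) v))) hS
  simp only [mem_filter, mem_univ, true_and] at hkS hmin
  refine ⟨k, hkS, u + ((h k - φ k u) / (- (φ k v * φ (b p) v))) • (-(φ (b p) v) • v), ?_, ?_⟩
  · intro r
    by_cases hrp : r = p
    · subst hrp
      simp only [Function.update_self, map_add, map_smul, smul_eq_mul]
      field_simp
      ring_nf
      have : φ k v ≠ 0 := by rintro h0; simp [h0] at hkS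
      have : φ (b r) v ≠ 0 := by rintro h0; simp [h0] at hkS
      field_simp
      ring
    · simp [Function.update_of_ne hrp, hr r hrp, hu1 r]
  · intro j
    have ht : 0 ≤ (h k - φ k u) / (- (φ k v * φ (b p) v)) :=
      div_nonneg (by linarith [hu2 k]) (by linarith)
    simp only [map_add, map_smul, smul_eq_mul]
    by_cases hj : φ j v * φ (b p) v < 0
    · have h1 := hmin j hj
      rw [le_div_iff₀ (by linarith)] at h1
      nlinarith
    · have := mul_nonneg ht (not_lt.1 hj)
      nlinarith [hu2 j]

lemma partner_unique {v : Fin (n + 1) → ℝ} {h : Fin d → ℝ} (hG : Gen φ h)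
    {b b' : Fin (n + 1) → Fin d} {p : Fin (n + 1)} (hf : Feas φ h b) (hf' : Feas φ h b')
    (hb : (Mt φ b).det ≠ 0) (hr : ∀ r, r ≠ p → φ (b r) v = 0) (hbb : ∀ r, r ≠ p → b' r = b r)
    (hs : 0 < φ (b p) v * φ (b' p) v) : b' p = b p := by
  obtain ⟨u, hu1, hu2⟩ := hf
  obtain ⟨u', hu1', hu2'⟩ := hf'
  have hj : φ (b p) v ≠ 0 := by intro h0; simp [h0] at hs
  have hk : φ (b' p) v ≠ 0 := by intro h0; simp [h0] at hs
  set c := φ (b p) (u' - u) / φ (b p) v with hc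
  have hz : u' - u - c • v = 0 := by
    apply Mt_ker hb
    intro r
    by_cases hrp : r = p
    · subst hrp
      rw [map_sub, map_smul, hc]
      simp only [smul_eq_mul]
      field_simp
      ring
    · have := hu1' r
      rw [hbb r hrp] at this
      simp [hr r hrp, hu1 r, this]
  have hu' : u' = u + c • v := by
    rw [sub_eq_zero, sub_eq_iff_eq_add'] at hz; exact hz
  have e1 := hu2' (b p)
  have e2 := hu2 (b' p)
  rw [← hu1 p, hu'] at e1
  rw [← hu1' p, hu'] at e2
  simp only [map_add, map_smul, smul_eq_mul] at e1 e2
  have e3 : c * φ (b p) v ≤ 0 := by linarith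
  have e4 : 0 ≤ c * φ (b' p) v := by linarith
  have hc0 : c = 0 := by
    have h5 : c ^ 2 * (φ (b p) v * φ (b' p) v) ≤ 0 := by nlinarith
    by_contra hcc
    have : 0 < c ^ 2 := by positivity
    nlinarith
  have huu : u' = u := by rw [hu', hc0]; simp
  obtain ⟨r, hr'⟩ := hG b hb u hu1 (b' p) (by rw [← huu]; exact hu1' p)
  by_cases hrp : r = p
  · rw [← hr', hrp]
  · exact absurd (hr' ▸ hr r hrp) hk

lemma Mt_update (b : Fin (n + 1) → Fin d) (p : Fin (n + 1)) (k : Fin d) :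
    Mt φ (Function.update b p k) = (Mt φ b).updateRow p (fun c => φ k (Pi.single c 1)) := by
  ext r c
  by_cases hr : r = p
  · subst hr; simp [Mt]
  · simp [Mt, hr, Matrix.updateRow_ne]

lemma det_rel {v : Fin (n + 1) → ℝ} (hv : v ≠ 0) {b : Fin (n + 1) → Fin d} {p : Fin (n + 1)}
    (hr : ∀ r, r ≠ p → φ (b r) v = 0) (k : Fin d) :
    φ k v * (Mt φ b).det = φ (b p) v * (Mt φ (Function.update b p k)).det := by
  have h1 : ((Mt φ b).updateRow p ((φ (b p) v) • (fun c => φ k (Pi.single c 1)) +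
      (-(φ k v)) • (fun c => φ (b p) (Pi.single c 1)))).det = 0 := by
    apply Matrix.exists_mulVec_eq_zero_iff.1
    refine ⟨v, hv, funext fun r => ?_⟩
    by_cases hrp : r = p
    · subst hrp
      have e1 := dual_apply (φ k) v
      have e2 := dual_apply (φ (b r)) v
      have : ∀ x : Fin (n + 1) → ℝ, ((Mt φ b).updateRow r x).mulVec v r = ∑ j, x j * v j := by
        intro x; simp [Matrix.mulVec, dotProduct]
      rw [this]
      simp only [Pi.add_apply, Pi.smul_apply, smul_eq_mul, add_mul, Finset.sum_add_distrib,
        mul_assoc, ← Finset.mul_sum]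
      rw [← e1, ← e2]
      simp; ring
    · have : ∀ x : Fin (n + 1) → ℝ, ((Mt φ b).updateRow p x).mulVec v r = (Mt φ b).mulVec v r := by
        intro x; simp [Matrix.mulVec, dotProduct, Matrix.updateRow_ne hrp]
      rw [this, Mt_mulVec, hr r hrp]; rfl
  rw [Matrix.det_updateRow_add, Matrix.det_updateRow_smul, Matrix.det_updateRow_smul,
    ← Mt_update, ← Mt_update, Function.update_eq_self] at h1
  linarith

lemma pair_mem {v : Fin (n + 1) → ℝ} (hv : v ≠ 0) {h : Fin d → ℝ} {b : Fin (n + 1) → Fin d}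
    {p : Fin (n + 1)} (hf : Feas φ h b) (hr : ∀ r, r ≠ p → φ (b r) v = 0)
    {k : Fin d} (hk : φ k v * φ (b p) v < 0) (hfk : Feas φ h (Function.update b p k))
    (hb : (Mt φ b).det ≠ 0) :
    term φ h b + term φ h (Function.update b p k) ∈
      pointIdealC v ^ ((fl univ φ v).card - n + 1) := by
  have hinj := Mt_inj hb
  have hkb : ∀ r, b r ≠ k := by
    intro r hrk
    by_cases hrp : r = p
    · subst hrp; rw [← hrk] at hk; nlinarith [mul_self_nonneg (φ (b r) v)]
    · rw [← hrk, hr r hrp] at hk; simp at hk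
  have hp0 : φ (b p) v ≠ 0 := by intro h0; simp [h0] at hk
  have hk0 : φ k v ≠ 0 := by intro h0; simp [h0] at hk
  set Q := (univ \ image b univ).erase k with hQ
  have e1 : univ \ image b univ = insert k Q := by
    rw [hQ, Finset.insert_erase]; simp [hkb]
  have e2 : univ \ image (Function.update b p k) univ = insert (b p) Q := by
    ext i
    simp only [hQ, mem_sdiff, mem_univ, true_and, mem_image, not_exists, mem_insert, mem_erase]
    constructor
    · intro hi
      by_cases hip : i = b p
      · exact Or.inl hip
      · refine Or.inr ⟨?_, fun r hrr => ?_⟩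
        · rintro rfl; exact hi p (by simp)
        · by_cases hrp : r = p
          · subst hrp; exact hip hrr.symm
          · exact hi r (by simp [Function.update_of_ne hrp, hrr])
    · rintro (rfl | ⟨h1, h2⟩) r hrr
      · by_cases hrp : r = p
        · subst hrp; simp at hrr; exact hkb r hrr.symm
        · rw [Function.update_of_ne hrp] at hrr; exact hrp (hinj hrr)
      · by_cases hrp : r = p
        · subst hrp; simp at hrr; exact h1 hrr.symm
        · rw [Function.update_of_ne hrp] at hrr; exact h2 r hrr
  have hkQ : k ∉ Q := by simp [hQ]
  have hpQ : b p ∉ Q := by simp [hQ]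
  have e3 : term φ h b + term φ h (Function.update b p k) =
      (∏ i ∈ Q, lin (φ i)) * lin (wt φ h b • φ k + wt φ h (Function.update b p k) • φ (b p)) := by
    unfold term
    rw [e1, e2, Finset.prod_insert hkQ, Finset.prod_insert hpQ, lin_add, lin_smul, lin_smul]
    ring
  rw [e3, pow_succ]
  apply Ideal.mul_mem_mul
  · apply prod_mem
    have h1 := card_J (φ := φ) (v := v) b
    have h2 := card_R1 hp0
    have h3 : ((univ \ image b univ).filter fun i => φ i v = 0) = Q.filter fun i => φ i v = 0 := by
      rw [e1, Finset.filter_insert, if_neg hk0]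
    rw [h3] at h1
    omega
  · apply lin_mem
    have h1 := congrArg abs (det_rel hv hr k)
    rw [abs_mul, abs_mul] at h1
    simp only [LinearMap.add_apply, LinearMap.smul_apply, smul_eq_mul, wt, hf, hfk, if_true]
    rcases lt_or_gt_of_ne hp0 with hp' | hp'
    · have : 0 < φ k v := by by_contra hc; nlinarith
      rw [abs_of_pos this, abs_of_neg hp'] at h1
      linarith
    · have : φ k v < 0 := by by_contra hc; nlinarith
      rw [abs_of_neg this, abs_of_pos hp'] at h1
      linarith

end exist

end Adj

namespace Adj

section exist2

variable {n d : ℕ} {φ : Fin d → Module.Dual ℝ (Fin (n + 1) → ℝ)}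

lemma adj_mem2 {v : Fin (n + 1) → ℝ} (hv : v ≠ 0) (hF : n ≤ (fl univ φ v).card)
    {h : Fin d → ℝ} (hG : Gen φ h)
    (hpos : ∃ i, 0 < φ i v) (hneg : ∃ i, φ i v < 0) :
    adj φ h ∈ pointIdealC v ^ ((fl univ φ v).card - n + 1) := by
  set q := Ideal.Quotient.mk (pointIdealC v ^ ((fl univ φ v).card - n + 1)) with hq
  rw [← Ideal.Quotient.eq_zero_iff_mem, ← hq]
  set S : Finset (Fin (n + 1) → Fin d) := univ.filter fun b => wt φ h b ≠ 0 ∧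
    ∃ p, φ (b p) v ≠ 0 ∧ ∀ r, r ≠ p → φ (b r) v = 0 with hS
  have hout : ∀ b, b ∉ S → q (term φ h b) = 0 := by
    intro b hb
    by_cases hw : wt φ h b = 0
    · simp [term, hw]
    · rw [hq, Ideal.Quotient.eq_zero_iff_mem]
      apply Ideal.mul_mem_left
      apply prod_mem
      obtain ⟨p, hp⟩ := card_R hv (wt_ne hw).2
      have h3 : ∃ r, r ≠ p ∧ φ (b r) v ≠ 0 := by
        by_contra hc
        push Not at hc
        exact hb (by simp only [hS, mem_filter, mem_univ, true_and]; exact ⟨hw, p, hp, hc⟩)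
      obtain ⟨r, hrp, hr⟩ := h3
      have h1 := card_J (φ := φ) (v := v) b
      have h2 := card_R2 hrp hp hr
      omega
  have hsum : q (adj φ h) = ∑ b ∈ S, q (term φ h b) := by
    rw [adj, map_sum]
    exact (Finset.sum_subset (Finset.subset_univ S) fun b _ hb => hout b hb).symm
  rw [hsum]
  have hex : ∀ b ∈ S, ∃ b', ∃ p k, φ (b p) v ≠ 0 ∧ (∀ r, r ≠ p → φ (b r) v = 0) ∧
      b' = Function.update b p k ∧ φ k v * φ (b p) v < 0 ∧ Feas φ h b' := by
    intro b hb
    simp only [hS, mem_filter, mem_univ, true_and] at hb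
    obtain ⟨hw, p, hp, hr⟩ := hb
    have : ∃ k, φ k v * φ (b p) v < 0 := by
      rcases lt_or_gt_of_ne hp with hp' | hp'
      · obtain ⟨k, hk⟩ := hpos
        exact ⟨k, mul_neg_of_pos_of_neg hk hp'⟩
      · obtain ⟨k, hk⟩ := hneg
        exact ⟨k, mul_neg_of_neg_of_pos hk hp'⟩
    obtain ⟨k, hk1, hk2⟩ := partner_exists (wt_ne hw).1 hr this
    exact ⟨_, p, k, hp, hr, rfl, hk1, hk2⟩
  choose! g hg using hex
  have hgS : ∀ b ∈ S, g b ∈ S := by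
    intro b hb
    obtain ⟨p, k, hp, hr, hgb, hk, hfk⟩ := hg b hb
    simp only [hS, mem_filter, mem_univ, true_and] at hb ⊢
    obtain ⟨hf, hdet⟩ := wt_ne hb.1
    have hk0 : φ k v ≠ 0 := by intro h0; simp [h0] at hk
    have hdr := det_rel hv hr k
    have hdet' : (Mt φ (g b)).det ≠ 0 := by
      rw [hgb]; intro h0; rw [h0, mul_zero] at hdr
      exact (mul_ne_zero hk0 hdet) hdr
    refine ⟨by simp [wt, hfk, hdet'], p, ?_, ?_⟩
    · rw [hgb]; simpa using hk0
    · intro r hrp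
      rw [hgb, Function.update_of_ne hrp]; exact hr r hrp
  have hgne : ∀ b ∈ S, g b ≠ b := by
    intro b hb heq
    obtain ⟨p, k, hp, hr, hgb, hk, hfk⟩ := hg b hb
    have : b p = k := by rw [← heq, hgb]; simp
    rw [this] at hk
    nlinarith [mul_self_nonneg (φ k v)]
  have hgg : ∀ b ∈ S, g (g b) = b := by
    intro b hb
    have hb' := hgS b hb
    have hb'' := hgS _ hb'
    obtain ⟨p, k, hp, hr, hgb, hk, hfk⟩ := hg b hb
    obtain ⟨p', k', hp', hr', hgb', hk', hfk'⟩ := hg _ hb'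
    have hpp : p' = p := by
      by_contra hne
      apply hp'
      rw [hgb, Function.update_of_ne hne]; exact hr _ hne
    subst hpp
    have hgk : g b p' = k := by rw [hgb]; simp
    rw [hgk] at hk'
    simp only [hS, mem_filter, mem_univ, true_and] at hb
    obtain ⟨hf, hdet⟩ := wt_ne hb.1
    have hoff : ∀ r, r ≠ p' → g (g b) r = b r := by
      intro r hrp
      rw [hgb', Function.update_of_ne hrp, hgb, Function.update_of_ne hrp]
    have hgk' : g (g b) p' = k' := by rw [hgb']; simp
    have hs : 0 < φ (b p') v * φ (g (g b) p') v := by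
      rw [hgk']
      have h1 := mul_pos_of_neg_of_neg hk hk'
      have hk0 : φ k v ≠ 0 := by intro h0; simp [h0] at hk
      have h2 : 0 < (φ k v) ^ 2 := by positivity
      by_contra hc
      nlinarith
    have := partner_unique hG hf hfk' hdet hr hoff hs
    funext r
    by_cases hrp : r = p'
    · rw [hrp, this]
    · exact hoff r hrp
  refine Finset.sum_involution (fun b _ => g b) ?_ (fun b hb _ => hgne b hb) (fun b hb => hgS b hb)
    (fun b hb => hgg b hb)
  intro b hb
  obtain ⟨p, k, hp, hr, hgb, hk, hfk⟩ := hg b hb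
  simp only [hS, mem_filter, mem_univ, true_and] at hb
  obtain ⟨hf, hdet⟩ := wt_ne hb.1
  rw [← map_add, hq, Ideal.Quotient.eq_zero_iff_mem, hgb]
  rw [hgb] at hfk
  exact pair_mem hv hf hr hk hfk hdet

lemma exists_basis (hsp : Sp univ φ) : ∃ b, (Mt φ b).det ≠ 0 := by
  obtain ⟨κ, a, ha, hspan, hli⟩ := exists_linearIndependent' ℝ φ
  have htop : Submodule.span ℝ (Set.range φ) = ⊤ := by
    have h1 : (Submodule.span ℝ (Set.range φ)).dualCoannihilator = ⊥ := by
      rw [eq_bot_iff]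
      intro x hx
      rw [Submodule.mem_dualCoannihilator] at hx
      exact hsp x fun i _ => hx _ (Submodule.subset_span ⟨i, rfl⟩)
    have h2 := Subspace.finrank_add_finrank_dualCoannihilator_eq (Submodule.span ℝ (Set.range φ))
    rw [h1, finrank_bot, add_zero, ← Subspace.dual_finrank_eq] at h2
    exact Submodule.eq_top_of_finrank_eq h2
  have htop' := hspan.trans htop
  let B := Module.Basis.mk hli htop'.ge
  haveI : Finite κ := Finite.of_injective a ha
  haveI := Fintype.ofFinite κ
  have hc : Fintype.card κ = n + 1 := by
    rw [← Module.finrank_eq_card_basis B, Subspace.dual_finrank_eq]; simp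
  let e : Fin (n + 1) ≃ κ := (Fintype.equivFinOfCardEq hc).symm
  refine ⟨fun r => a (e r), fun h0 => ?_⟩
  obtain ⟨v, hv, hv0⟩ := Matrix.exists_mulVec_eq_zero_iff.2 h0
  apply hv
  have h3 : ∀ k, φ (a k) v = 0 := by
    intro k
    have := congrFun hv0 (e.symm k)
    rw [Mt_mulVec] at this
    simpa using this
  have h4 : Submodule.span ℝ (Set.range (φ ∘ a)) ≤ LinearMap.ker (Module.Dual.eval ℝ _ v) := by
    rw [Submodule.span_le]
    rintro _ ⟨k, rfl⟩
    simpa using h3 k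
  rw [htop'] at h4
  apply hsp v
  intro i _
  have := h4 (Submodule.mem_top (x := φ i))
  simpa using this

/-- slack functional -/
def Lam (φ : Fin d → Module.Dual ℝ (Fin (n + 1) → ℝ)) (b : Fin (n + 1) → Fin d) (j : Fin d) :
    Module.Dual ℝ (Fin d → ℝ) :=
  LinearMap.proj j - φ j ∘ₗ (Matrix.mulVecLin (Mt φ b)⁻¹) ∘ₗ (LinearMap.funLeft ℝ ℝ b)

lemma Lam_apply (b : Fin (n + 1) → Fin d) (j : Fin d) (h : Fin d → ℝ) :
    Lam φ b j h = h j - φ j ((Mt φ b)⁻¹.mulVec (h ∘ b)) := by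
  simp only [Lam, LinearMap.sub_apply, LinearMap.proj_apply, LinearMap.comp_apply,
    Matrix.mulVecLin_apply]
  rfl

lemma sol {b : Fin (n + 1) → Fin d} (hb : (Mt φ b).det ≠ 0) (h : Fin d → ℝ) (r : Fin (n + 1)) :
    φ (b r) ((Mt φ b)⁻¹.mulVec (h ∘ b)) = h (b r) := by
  rw [← Mt_mulVec, Matrix.mulVec_mulVec, Matrix.mul_nonsing_inv _ (isUnit_iff_ne_zero.2 hb)]
  simp

lemma sol_unique {b : Fin (n + 1) → Fin d} (hb : (Mt φ b).det ≠ 0) {h : Fin d → ℝ}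
    {u : Fin (n + 1) → ℝ} (hu : ∀ r, φ (b r) u = h (b r)) :
    u = (Mt φ b)⁻¹.mulVec (h ∘ b) := by
  rw [← sub_eq_zero]
  apply Mt_ker hb
  intro r
  rw [map_sub, sol hb, hu r, sub_self]

lemma exists_generic {b0 : Fin (n + 1) → Fin d} (hb0 : (Mt φ b0).det ≠ 0) :
    ∃ h, Gen φ h ∧ Feas φ h b0 := by
  let κ := {x : (Fin (n + 1) → Fin d) × Fin d // (Mt φ x.1).det ≠ 0 ∧ ∀ r, x.1 r ≠ x.2}
  let O : κ → Set (Fin d → ℝ) := fun x => ((LinearMap.ker (Lam φ x.1.1 x.1.2) : Submodule ℝ _) :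
    Set (Fin d → ℝ))ᶜ
  have hcont : ∀ b j, Continuous (Lam φ b j) := fun b j => LinearMap.continuous_of_finiteDimensional _
  have hopen : ∀ x, IsOpen (O x) := fun x =>
    (Submodule.closed_of_finiteDimensional _).isOpen_compl
  have hdense : ∀ x, Dense (O x) := by
    intro x
    rw [← interior_eq_empty_iff_dense_compl]
    by_contra hne
    have := Submodule.eq_top_of_nonempty_interior' _ (Set.nonempty_iff_ne_empty.2 hne)
    have h1 : Lam φ x.1.1 x.1.2 (Pi.single x.1.2 1) = 0 := by
      have : (Pi.single x.1.2 1 : Fin d → ℝ) ∈ LinearMap.ker (Lam φ x.1.1 x.1.2) := by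
        rw [this]; trivial
      exact this
    rw [Lam_apply] at h1
    have h2 : (Pi.single x.1.2 1 : Fin d → ℝ) ∘ x.1.1 = 0 := by
      funext r
      simp [Pi.single_apply, x.2.2 r]
    rw [h2] at h1
    simp at h1
  have hD := dense_iInter_of_isOpen hopen hdense
  let U : Set (Fin d → ℝ) := ⋂ j : {j // ∀ r, b0 r ≠ j}, {h | 0 < Lam φ b0 j.1 h}
  have hU : IsOpen U := isOpen_iInter_of_finite fun j => isOpen_lt continuous_const (hcont _ _)
  have hUne : U.Nonempty := by
    refine ⟨fun j => if ∀ r, b0 r ≠ j then 1 else 0, ?_⟩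
    simp only [U, Set.mem_iInter]
    intro j
    change 0 < Lam φ b0 j.1 _
    rw [Lam_apply]
    have : (fun j => if ∀ r, b0 r ≠ j then (1 : ℝ) else 0) ∘ b0 = 0 := by
      funext r
      simp
    rw [this]
    simp only [Matrix.mulVec_zero, map_zero, sub_zero]
    rw [if_pos j.2]; exact one_pos
  obtain ⟨h, hhU, hhO⟩ := hD.inter_open_nonempty U hU hUne
  refine ⟨h, ?_, ?_⟩
  · intro b hb u hu j hj
    by_contra hc
    push Not at hc
    have := Set.mem_iInter.1 hhO ⟨(b, j), hb, hc⟩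
    apply this
    change Lam φ b j h = 0
    rw [Lam_apply, ← sol_unique hb hu, hj, sub_self]
  · refine ⟨_, sol hb0 h, fun j => ?_⟩
    by_cases hj : ∃ r, b0 r = j
    · obtain ⟨r, rfl⟩ := hj
      exact (sol hb0 h r).le
    · push Not at hj
      have h1 : 0 < Lam φ b0 j h := Set.mem_iInter.1 hhU ⟨j, hj⟩
      rw [Lam_apply] at h1
      linarith

end exist2

end Adj

namespace Adj

section bridge

variable {n d : ℕ}

/-- linear functional of a real polynomial -/
def dl {N : ℕ} : MvPolynomial (Fin N) ℝ →ₗ[ℝ] Module.Dual ℝ (Fin N → ℝ) where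
  toFun p := ∑ j, coeff (Finsupp.single j 1) p • LinearMap.proj j
  map_add' p q := by simp [add_smul, Finset.sum_add_distrib]
  map_smul' c p := by simp [Finset.smul_sum, mul_smul]

lemma dl_eq {N : ℕ} {p : MvPolynomial (Fin N) ℝ} (hp : p.IsHomogeneous 1) (v : Fin N → ℝ) :
    dl p v = eval v p := by
  have h1 : p ∈ Submodule.span ℝ (Set.range (X : Fin N → MvPolynomial (Fin N) ℝ)) := by
    rw [← homogeneousSubmodule_one_eq_span_X]; exact hp
  clear hp
  induction h1 using Submodule.span_induction with
  | mem x hx =>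
    obtain ⟨i, rfl⟩ := hx
    simp [dl, coeff_X, Finsupp.single_left_inj, Pi.single_apply]
  | zero => simp
  | add x y _ _ hx hy => simp [hx, hy]
  | smul a x _ hx => simp [hx, smul_eval]

lemma dl_inj {N : ℕ} {p : MvPolynomial (Fin N) ℝ} (hp : p.IsHomogeneous 1) (h : dl p = 0) :
    p = 0 := by
  apply MvPolynomial.funext
  intro x
  rw [← dl_eq hp, h]; simp

variable {ℓ : Fin d → MvPolynomial (Fin (n + 1)) ℝ}

lemma flat_eq (hh : ∀ i, (ℓ i).IsHomogeneous 1) (v : Fin (n + 1) → ℝ) :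
    flatOf ℓ v = fl univ (fun i => dl (ℓ i)) v := by
  ext i; simp [flatOf, fl, dl_eq (hh i)]

lemma rk_eq (hh : ∀ i, (ℓ i).IsHomogeneous 1) (v : Fin (n + 1) → ℝ) :
    rkOf ℓ v + Module.finrank ℝ (Submodule.span ℝ
      ((fun i => dl (ℓ i)) '' (fl univ (fun i => dl (ℓ i)) v : Set (Fin d)))).dualCoannihilator
      = n + 1 := by
  have h1 : rkOf ℓ v = Module.finrank ℝ (Submodule.span ℝ
      ((fun i => dl (ℓ i)) '' (fl univ (fun i => dl (ℓ i)) v : Set (Fin d)))) := by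
    have h2 : Submodule.span ℝ
        ((fun i => dl (ℓ i)) '' (fl univ (fun i => dl (ℓ i)) v : Set (Fin d))) =
        (Submodule.span ℝ (ℓ '' (flatOf ℓ v : Set (Fin d)))).map dl := by
      rw [Submodule.map_span, ← Set.image_comp, flat_eq hh]; rfl
    rw [h2, rkOf]
    symm
    have hle : Submodule.span ℝ (ℓ '' (flatOf ℓ v : Set (Fin d))) ≤
        homogeneousSubmodule (Fin (n + 1)) ℝ 1 := by
      rw [Submodule.span_le]
      rintro _ ⟨i, _, rfl⟩
      exact hh i
    rw [← LinearMap.range_domRestrict]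
    apply LinearMap.finrank_range_of_inj
    rw [← LinearMap.ker_eq_bot, eq_bot_iff]
    intro x hx
    have := dl_inj (hle x.2) (by simpa using hx)
    simpa using this
  rw [h1, Subspace.finrank_add_finrank_dualCoannihilator_eq]
  simp

lemma mem_coann {φ : Fin d → Module.Dual ℝ (Fin (n + 1) → ℝ)} {v w : Fin (n + 1) → ℝ} :
    w ∈ (Submodule.span ℝ (φ '' (fl univ φ v : Set (Fin d)))).dualCoannihilator ↔
      ∀ i, φ i v = 0 → φ i w = 0 := by
  rw [Submodule.mem_dualCoannihilator]
  constructor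
  · intro h i hi
    exact h _ (Submodule.subset_span ⟨i, by simp [fl, hi], rfl⟩)
  · intro h
    have : Submodule.span ℝ (φ '' (fl univ φ v : Set (Fin d))) ≤
        LinearMap.ker (Module.Dual.eval ℝ _ w) := by
      rw [Submodule.span_le]
      rintro _ ⟨i, hi, rfl⟩
      simpa using h i (by simpa [fl] using hi)
    intro ψ hψ
    simpa using this hψ

lemma rk_iff (hh : ∀ i, (ℓ i).IsHomogeneous 1) {v : Fin (n + 1) → ℝ} (hv : v ≠ 0) :
    rkOf ℓ v = n ↔ IsPt univ (fun i => dl (ℓ i)) v := by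
  have h1 := rk_eq hh v
  set W := (Submodule.span ℝ
      ((fun i => dl (ℓ i)) '' (fl univ (fun i => dl (ℓ i)) v : Set (Fin d)))).dualCoannihilator
      with hW
  have hvW : v ∈ W := by rw [hW, mem_coann]; exact fun i hi => hi
  have h2 : rkOf ℓ v = n ↔ Module.finrank ℝ W = 1 := by omega
  rw [h2, finrank_eq_one_iff_of_nonzero' (⟨v, hvW⟩ : W) (by simpa using hv)]
  constructor
  · intro h
    refine ⟨hv, fun w hw => ?_⟩
    obtain ⟨c, hc⟩ := h ⟨w, by rw [hW, mem_coann]; exact fun i hi => hw i (mem_univ _) hi⟩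
    exact ⟨c, by simpa using (congrArg Subtype.val hc).symm⟩
  · rintro ⟨_, h⟩ ⟨w, hw⟩
    obtain ⟨c, hc⟩ := h w fun i _ hi => mem_coann.1 hw i hi
    exact ⟨c, Subtype.ext (by simpa using hc.symm)⟩

lemma rk_le (v : Fin (n + 1) → ℝ) : rkOf ℓ v ≤ (flatOf ℓ v).card := by
  unfold rkOf
  have h : (ℓ '' (flatOf ℓ v : Set (Fin d))) =
      (((flatOf ℓ v).image ℓ : Finset _) : Set _) := by simp
  rw [h]
  exact (finrank_span_finset_le_card _).trans Finset.card_image_le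

lemma recession (hP : IsPolytopeSetup ℓ) {z : Fin (n + 1) → ℝ} (h0 : z 0 = 0)
    (hz : ∀ i, 0 ≤ dl (ℓ i) z) : z = 0 := by
  have hPne : (polytopeOf ℓ).Nonempty := by
    obtain ⟨y, hy⟩ := hP.hfacet_ne ⟨0, by have := hP.hd; omega⟩
    exact ⟨y, hy.1⟩
  obtain ⟨y, hy⟩ := hPne
  by_contra hne
  obtain ⟨B, hB⟩ := hP.hcpt.isBounded.exists_norm_le
  have hzt : Fin.tail z ≠ 0 := by
    intro h
    apply hne
    funext i
    refine Fin.cases h0 (fun j => ?_) i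
    exact congrFun h j
  have hmem : ∀ t : ℝ, 0 ≤ t → y + t • Fin.tail z ∈ polytopeOf ℓ := by
    intro t ht i
    have : lift1 (y + t • Fin.tail z) = lift1 y + t • z := by
      funext k
      refine Fin.cases ?_ (fun j => ?_) k
      · simp [lift1, h0]
      · simp [lift1, Fin.tail]
    rw [this, ← dl_eq (hP.hhom i), map_add, map_smul, dl_eq (hP.hhom i) (lift1 y)]
    exact add_nonneg (hy i) (mul_nonneg ht (hz i))
  have hpos : 0 < ‖Fin.tail z‖ := norm_pos_iff.2 hzt
  have hB0 : 0 ≤ B := (norm_nonneg _).trans (hB _ hy)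
  have h1 := hB _ (hmem ((B + ‖y‖ + 1) / ‖Fin.tail z‖) (by positivity))
  have h2 : ‖((B + ‖y‖ + 1) / ‖Fin.tail z‖) • Fin.tail z‖ = B + ‖y‖ + 1 := by
    rw [norm_smul, Real.norm_of_nonneg (by positivity)]
    field_simp
  have h3 := norm_sub_le (y + ((B + ‖y‖ + 1) / ‖Fin.tail z‖) • Fin.tail z) y
  rw [add_sub_cancel_left, h2] at h3
  linarith

lemma interior_pt (hP : IsPolytopeSetup ℓ) : ∃ x : Fin (n + 1) → ℝ, x 0 = 1 ∧
    ∀ i, 0 < dl (ℓ i) x := by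
  have h1 : ∀ i, ∃ y ∈ polytopeOf ℓ, 0 < dl (ℓ i) (lift1 y) := by
    intro i
    by_contra hc
    push Not at hc
    have hz : ∀ y ∈ polytopeOf ℓ, dl (ℓ i) (lift1 y) = 0 := fun y hy =>
      le_antisymm (hc y hy) (by rw [dl_eq (hP.hhom i)]; exact hy i)
    let g : (Fin n → ℝ) →ₗ[ℝ] (Fin (n + 1) → ℝ) :=
      { toFun := fun y => Fin.cons 0 y
        map_add' := fun x y => by
          funext k; refine Fin.cases ?_ (fun j => ?_) k <;> simp
        map_smul' := fun c y => by
          funext k; refine Fin.cases ?_ (fun j => ?_) k <;> simp }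
    have hlift : ∀ y, lift1 y = Pi.single 0 1 + g y := by
      intro y
      funext k; refine Fin.cases ?_ (fun j => ?_) k <;> simp [lift1, g]
    let A : (Fin n → ℝ) →ᵃ[ℝ] ℝ :=
      (dl (ℓ i) ∘ₗ g).toAffineMap + AffineMap.const ℝ _ (dl (ℓ i) (Pi.single 0 1))
    have hA : ∀ y, A y = dl (ℓ i) (lift1 y) := by
      intro y; rw [hlift y, map_add]; simp [A, add_comm]
    have hA0 : A = AffineMap.const ℝ _ 0 := by
      apply AffineMap.ext_on hP.hfull
      intro y hy
      rw [hA y, hz y hy]; rfl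
    have hall : ∀ y, dl (ℓ i) (lift1 y) = 0 := by
      intro y; rw [← hA y, hA0]; rfl
    apply hP.hne i
    apply dl_inj (hP.hhom i)
    have e0 : dl (ℓ i) (Pi.single 0 1) = 0 := by
      have := hall 0; rw [hlift 0] at this; simpa using this
    refine LinearMap.ext fun x => ?_
    have e1 := hall (Fin.tail x)
    rw [hlift, map_add, e0, zero_add] at e1
    have : x = x 0 • Pi.single 0 1 + g (Fin.tail x) := by
      funext k; refine Fin.cases ?_ (fun j => ?_) k <;> simp [g, Fin.tail]
    rw [this, map_add, map_smul, e0, e1]; simp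
  choose y hy hpos using h1
  have hd : 0 < (d : ℝ) := by
    have := hP.hd
    exact_mod_cast (by omega : 0 < d)
  refine ⟨(d : ℝ)⁻¹ • ∑ k, lift1 (y k), ?_, ?_⟩
  · simp [lift1]; field_simp
  · intro i
    rw [map_smul, map_sum, smul_eq_mul]
    apply mul_pos (inv_pos.2 hd)
    apply Finset.sum_pos'
    · intro k _
      rw [dl_eq (hP.hhom i)]; exact hy k i
    · exact ⟨i, mem_univ _, hpos i⟩

lemma cone_pos (hP : IsPolytopeSetup ℓ) {v : Fin (n + 1) → ℝ} (hv : v ≠ 0)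
    (hc : ∀ i, 0 ≤ dl (ℓ i) v) : 0 < v 0 := by
  by_contra hlt
  rcases lt_or_eq_of_le (not_lt.1 hlt) with h | h
  · obtain ⟨x, hx0, hx⟩ := interior_pt hP
    have hi : ∀ i, 0 < dl (ℓ i) ((-(v 0)) • x + v) := by
      intro i
      rw [map_add, map_smul, smul_eq_mul]
      have := mul_pos (neg_pos.2 h) (hx i)
      linarith [hc i]
    have h1 := recession hP (z := (-(v 0)) • x + v) (by simp [hx0]) fun i => (hi i).le
    have h2 := hi ⟨0, by have := hP.hd; omega⟩
    rw [h1] at h2; simp at h2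
  · exact hv (recession hP h hc)

lemma setup_sp (hP : IsPolytopeSetup ℓ) : Sp univ (fun i => dl (ℓ i)) := by
  intro v hv
  by_contra hne
  have h1 := cone_pos hP hne fun i => (hv i (mem_univ _)).ge
  have h2 := cone_pos hP (neg_ne_zero.2 hne) fun i => by
    rw [map_neg, hv i (mem_univ _)]; simp
  simp at h2
  linarith

lemma face_mem {v : Fin (n + 1) → ℝ} {y : Fin n → ℝ} (hP : IsPolytopeSetup ℓ)
    (hpt : IsPt univ (fun i => dl (ℓ i)) v) (hy : y ∈ faceOf ℓ v) :
    ∃ c : ℝ, c ≠ 0 ∧ lift1 y = c • v := by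
  obtain ⟨c, hc⟩ := hpt.2 (lift1 y) fun i _ hi => by
    rw [dl_eq (hP.hhom i)]
    exact hy.2 i (by rw [flat_eq hP.hhom]; simp [fl, hi])
  refine ⟨c, ?_, hc⟩
  rintro rfl
  have := congrFun hc 0
  simp [lift1] at this

lemma ord_ge (v : Fin (n + 1) → ℝ) : nlOf ℓ v ≤ ordOf ℓ v := by
  unfold ordOf; split_ifs <;> omega

lemma ord_out (hP : IsPolytopeSetup ℓ) {v : Fin (n + 1) → ℝ}
    (hpt : IsPt univ (fun i => dl (ℓ i)) v)
    (h1 : v ∉ cone univ (fun i => dl (ℓ i))) (h2 : -v ∉ cone univ (fun i => dl (ℓ i))) :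
    ordOf ℓ v = nlOf ℓ v + 1 := by
  unfold ordOf
  rw [if_neg]
  rintro ⟨⟨y, hy⟩, _⟩
  obtain ⟨c, hc0, hc⟩ := face_mem hP hpt hy
  have h3 : ∀ i, 0 ≤ c * dl (ℓ i) v := by
    intro i
    have := hy.1 i
    rwa [← dl_eq (hP.hhom i), hc, map_smul, smul_eq_mul] at this
  rcases lt_or_gt_of_ne hc0 with h | h
  · apply h2
    intro i _
    have := h3 i
    simp only [map_neg]
    by_contra hh
    nlinarith
  · apply h1
    intro i _
    have := h3 i
    by_contra hh
    simp only at hh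
    nlinarith

lemma ord_in (hP : IsPolytopeSetup ℓ) {v : Fin (n + 1) → ℝ} (hrk : rkOf ℓ v = n)
    (hpt : IsPt univ (fun i => dl (ℓ i)) v) {c : ℝ} (hc0 : c ≠ 0)
    (h1 : ∀ i, 0 ≤ dl (ℓ i) (c • v)) : ordOf ℓ v = nlOf ℓ v := by
  have hpos := cone_pos hP (smul_ne_zero hc0 hpt.1) h1
  set w := c • v with hw
  set y : Fin n → ℝ := Fin.tail ((w 0)⁻¹ • w) with hy
  have hly : lift1 y = (w 0)⁻¹ • w := by
    funext k; refine Fin.cases ?_ (fun j => ?_) k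
    · simp [lift1, hpos.ne']
    · simp [lift1, hy, Fin.tail]
  have hface : faceOf ℓ v = {y} := by
    apply Set.eq_singleton_iff_unique_mem.2
    constructor
    · refine ⟨fun i => ?_, fun i hi => ?_⟩
      · rw [← dl_eq (hP.hhom i), hly, map_smul]
        exact mul_nonneg (inv_pos.2 hpos).le (h1 i)
      · rw [← dl_eq (hP.hhom i), hly, map_smul, hw, map_smul]
        rw [flat_eq hP.hhom] at hi
        simp only [fl, mem_filter, mem_univ, true_and] at hi
        rw [hi]; simp
    · intro x hx
      obtain ⟨e, he0, he⟩ := face_mem hP hpt hx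
      have e0 := congrFun he 0
      have hv0 : v 0 ≠ 0 := by
        intro h; simp [hw, h] at hpos
      have : lift1 x = lift1 y := by
        rw [he, hly, hw, smul_smul]
        congr 1
        simp [lift1] at e0 ⊢
        field_simp
        linarith
      exact (Fin.cons_right_injective (α := fun _ => ℝ) 1 this)
  unfold ordOf
  rw [if_pos]
  refine ⟨by simp [hface], ?_⟩
  rw [hface, hrk, direction_affineSpan]
  simp

lemma vanish_of_mem {v : Fin (n + 1) → ℝ} {s : ℕ} {f : MvPolynomial (Fin (n + 1)) ℂ}
    (h : f ∈ pointIdealC v ^ s) : VanishAt f v s := by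
  have h1 : pointIdealC v ≤ Ideal.comap (tau v) (Ideal.span {Polynomial.X}) := by
    rw [pointIdealC, Ideal.span_le]
    rintro p ⟨hp, hpv⟩
    rw [SetLike.mem_coe, Ideal.mem_comap, Ideal.mem_span_singleton]
    have key : ∀ q : MvPolynomial (Fin (n + 1)) ℂ, q.IsHomogeneous 1 →
        tau v q = Polynomial.C (C (eval (fun i => (v i : ℂ)) q)) +
          Polynomial.X * Polynomial.C q := by
      intro q hq
      have hq1 : q ∈ Submodule.span ℂ (Set.range (X : Fin (n + 1) → MvPolynomial _ ℂ)) := by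
        rw [← homogeneousSubmodule_one_eq_span_X]; exact hq
      clear hq
      induction hq1 using Submodule.span_induction with
      | mem x hx => obtain ⟨i, rfl⟩ := hx; simp [tau_X]
      | zero => simp
      | add x y _ _ hx hy => rw [map_add, hx, hy]; simp; ring
      | smul a x _ hx =>
        rw [smul_eq_C_mul, map_mul, tau_C, hx]; simp; ring
    rw [key p hp, hpv]; simp
  have h2 : pointIdealC v ^ s ≤ Ideal.comap (tau v) (Ideal.span {Polynomial.X} ^ s) :=
    (Ideal.pow_right_mono h1 s).trans (Ideal.le_comap_pow _ _)
  have h3 := h2 h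
  rw [Ideal.mem_comap, Ideal.span_singleton_pow, Ideal.mem_span_singleton] at h3
  exact h3

end bridge

end Adj

/-- The set consisting of the zero polynomial together with all homogeneous
polynomials `f ∈ ℂ[X₀,…,Xₙ]` of degree `d − n − 1` vanishing at every point `v` of the point
residual `R₀(P)` to order at least `ord_P(v)` is a `ℂ`-linear subspace of dimension exactly 1. -/
theorem adjoint_interpolation_dim_one {n d : ℕ}
    (ℓ : Fin d → MvPolynomial (Fin (n + 1)) ℝ) (hP : IsPolytopeSetup ℓ) :
    ∃ S : Submodule ℂ (MvPolynomial (Fin (n + 1)) ℂ),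
      (S : Set (MvPolynomial (Fin (n + 1)) ℂ)) =
        {f | f = 0 ∨ (f.IsHomogeneous (d - n - 1) ∧
          ∀ v : Fin (n + 1) → ℝ, v ≠ 0 → rkOf ℓ v = n →
            f ∈ pointIdealC v ^ ordOf ℓ v)} ∧
      Module.finrank ℂ S = 1 := by
  set φ : Fin d → Module.Dual ℝ (Fin (n + 1) → ℝ) := fun i => Adj.dl (ℓ i) with hφ
  have hd := hP.hd
  have hsp : Adj.Sp univ φ := Adj.setup_sp hP
  have hne : ∀ i ∈ (univ : Finset (Fin d)), φ i ≠ 0 := fun i _ h0 =>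
    hP.hne i (Adj.dl_inj (hP.hhom i) h0)
  let Q : MvPolynomial (Fin (n + 1)) ℂ → Prop := fun f => f.IsHomogeneous (d - n - 1) ∧
    ∀ v : Fin (n + 1) → ℝ, v ≠ 0 → rkOf ℓ v = n → f ∈ pointIdealC v ^ ordOf ℓ v
  let S : Submodule ℂ (MvPolynomial (Fin (n + 1)) ℂ) :=
    { carrier := {f | Q f}
      add_mem' := fun {a b} ha hb => ⟨ha.1.add hb.1, fun v hv hr =>
        Ideal.add_mem _ (ha.2 v hv hr) (hb.2 v hv hr)⟩
      zero_mem' := ⟨isHomogeneous_zero _ _ _, fun v _ _ => Ideal.zero_mem _⟩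
      smul_mem' := fun c a ha => ⟨(homogeneousSubmodule (Fin (n + 1)) ℂ (d - n - 1)).smul_mem c ha.1,
        fun v hv hr => by
          rw [smul_eq_C_mul]; exact Ideal.mul_mem_left _ _ (ha.2 v hv hr)⟩ }
  have hQ0 : Q 0 := S.zero_mem
  have hT : ∀ f, Q f → Adj.T univ φ (Adj.cone univ φ) (d - n - 1) f := by
    intro f hf
    refine ⟨hf.1, fun v hpt => ?_⟩
    have hrk := (Adj.rk_iff hP.hhom hpt.1).2 hpt
    have hvan := Adj.vanish_of_mem (hf.2 v hpt.1 hrk)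
    have hnl : nlOf ℓ v = (Adj.fl univ φ v).card - n := by
      rw [nlOf, hrk, Adj.flat_eq hP.hhom]
    have hge := Adj.ord_ge (ℓ := ℓ) v
    have hle := Adj.rk_le (ℓ := ℓ) v
    rw [hrk, Adj.flat_eq hP.hhom] at hle
    change n ≤ (Adj.fl univ φ v).card at hle
    refine ⟨Adj.vanish_mono (by omega) hvan, fun h1 h2 => ?_⟩
    have := Adj.ord_out hP hpt h1 h2
    exact Adj.vanish_mono (by omega) hvan
  obtain ⟨b0, hb0⟩ := Adj.exists_basis hsp
  obtain ⟨h, hG, hF⟩ := Adj.exists_generic hb0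
  obtain ⟨x, _, hx⟩ := Adj.interior_pt hP
  have hadj0 : Adj.adj φ h ≠ 0 := Adj.adj_ne hx hb0 hF
  have hadj : Q (Adj.adj φ h) := by
    refine ⟨Adj.adj_hom h, fun v hv hrk => ?_⟩
    have hpt := (Adj.rk_iff hP.hhom hv).1 hrk
    have hnl : nlOf ℓ v = (Adj.fl univ φ v).card - n := by
      rw [nlOf, hrk, Adj.flat_eq hP.hhom]
    have hle := Adj.rk_le (ℓ := ℓ) v
    rw [hrk, Adj.flat_eq hP.hhom] at hle
    change n ≤ (Adj.fl univ φ v).card at hle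
    by_cases h1 : ∃ i, 0 < φ i v
    · by_cases h2 : ∃ i, φ i v < 0
      · have := Adj.adj_mem2 hv hle hG h1 h2
        refine Ideal.pow_le_pow_right ?_ this
        unfold ordOf
        split_ifs <;> omega
      · push Not at h2
        rw [Adj.ord_in hP hrk hpt one_ne_zero (fun i => by rw [one_smul]; exact h2 i), hnl]
        exact Adj.adj_mem1 hv h
    · push Not at h1
      rw [Adj.ord_in hP hrk hpt (neg_ne_zero.2 one_ne_zero) (fun i => by
        rw [neg_smul, one_smul, map_neg]; exact neg_nonneg.2 (h1 i)), hnl]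
      exact Adj.adj_mem1 hv h
  refine ⟨S, ?_, ?_⟩
  · ext f
    constructor
    · intro hf; exact Or.inr hf
    · rintro (rfl | hf)
      · exact S.zero_mem
      · exact hf
  · rw [finrank_eq_one_iff_of_nonzero' (⟨Adj.adj φ h, hadj⟩ : S)
      (fun h0 => hadj0 (congrArg Subtype.val h0))]
    rintro ⟨f, hf⟩
    obtain ⟨a, b, hab, he⟩ := Adj.uniq (Fin d) _ n univ φ (d - n - 1) f (Adj.adj φ h) rfl hne hsp
      (by simp; omega) (hT f hf) (hT _ hadj)
    have ha : a ≠ 0 := by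
      rintro rfl
      have hb : b ≠ 0 := by simpa using hab
      simp [hb, hadj0] at he
    refine ⟨-(b / a), Subtype.ext ?_⟩
    change (-(b / a)) • Adj.adj φ h = f
    have h3 : C a * f = C a * ((-(b / a)) • Adj.adj φ h) := by
      rw [smul_eq_C_mul, ← mul_assoc, ← C_mul]
      have : a * (-(b / a)) = -b := by field_simp
      rw [this, C_neg, neg_mul]
      exact eq_neg_of_add_eq_zero_left he
    exact (mul_left_cancel₀ (by simpa using ha) h3).symm

end
end

section
/- Let f ∈ ℂ[X₀, …, Xₙ] be homogeneous of degree d − n − 1 and suppose that f ∈ I_v^{ord_P(v)} for every v in the point residual R₀(P). Then f ∈ I_v^{ord_P(L_v)} for every nonzero v ∈ ℝ^{n+1}. (Reduction of the interpolation problem to dimension zero: prescribed vanishing at the finitely many points of the point residual already forces the prescribed vanishing order at every point of projective space.) -/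
open MvPolynomial Finset Classical

noncomputable section

/-! ### Polynomial part -/

section PolyPart

/-- The ideal of elements whose `T^k`-coefficient is divisible by `a^(e-k)`. -/
def coeffIdeal {A : Type*} [CommRing A] (a : A) (e : ℕ) : Ideal (Polynomial A) where
  carrier := {g | ∀ k, a ^ (e - k) ∣ g.coeff k}
  add_mem' := by
    intro g h hg hh k
    rw [Polynomial.coeff_add]
    exact dvd_add (hg k) (hh k)
  zero_mem' := by intro k; simp
  smul_mem' := by
    intro c g hg k
    rw [smul_eq_mul, Polynomial.coeff_mul]
    refine Finset.dvd_sum fun x hx => ?_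
    rw [HasAntidiagonal.mem_antidiagonal] at hx
    exact Dvd.dvd.mul_left ((pow_dvd_pow a (by omega)).trans (hg x.2)) _

lemma pow_le_coeffIdeal {A : Type*} [CommRing A] (a : A) (J : Ideal (Polynomial A))
    (hJ : ∀ g ∈ J, a ∣ g.coeff 0) (e : ℕ) : J ^ e ≤ coeffIdeal a e := by
  induction e with
  | zero => intro g _ k; simp
  | succ e ih =>
    rw [pow_succ, Ideal.mul_le]
    intro g hg h hh k
    rw [Polynomial.coeff_mul]
    refine Finset.dvd_sum fun x hx => ?_
    rw [HasAntidiagonal.mem_antidiagonal] at hx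
    have h1 := ih hg x.1
    rcases Nat.eq_zero_or_pos x.2 with h2 | h2
    · rw [h2]
      refine (pow_dvd_pow a (by omega : e + 1 - k ≤ (e - x.1) + 1)).trans ?_
      rw [pow_succ]
      exact mul_dvd_mul h1 (hJ h hh)
    · exact Dvd.dvd.mul_right ((pow_dvd_pow a (by omega)).trans h1) _

/-- Total degree filtration on `R[S][T]`. -/
def degFilt {R : Type*} [CommRing R] (D : ℕ) (g : Polynomial (Polynomial R)) : Prop :=
  ∀ k j, D < k + j → (g.coeff k).coeff j = 0

lemma degFilt_mul {R : Type*} [CommRing R] {a b : ℕ} {g h : Polynomial (Polynomial R)}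
    (hg : degFilt a g) (hh : degFilt b h) : degFilt (a + b) (g * h) := by
  intro k j hkj
  rw [Polynomial.coeff_mul, Polynomial.finsetSum_coeff]
  refine Finset.sum_eq_zero fun x hx => ?_
  rw [HasAntidiagonal.mem_antidiagonal] at hx
  rw [Polynomial.coeff_mul]
  refine Finset.sum_eq_zero fun y hy => ?_
  rw [HasAntidiagonal.mem_antidiagonal] at hy
  by_cases hc : a < x.1 + y.1
  · rw [hg _ _ hc, zero_mul]
  · rw [hh _ _ (by omega), mul_zero]

lemma degFilt_one {R : Type*} [CommRing R] : degFilt (R := R) 0 1 := by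
  intro k j hkj
  rw [Polynomial.coeff_one]
  split_ifs with h
  · rw [Polynomial.coeff_one, if_neg (by omega)]
  · simp

lemma degFilt_pow {R : Type*} [CommRing R] {g : Polynomial (Polynomial R)}
    (hg : degFilt 1 g) (m : ℕ) : degFilt m (g ^ m) := by
  induction m with
  | zero => simpa using degFilt_one
  | succ m ih => rw [pow_succ]; exact degFilt_mul ih hg

lemma degFilt_prod {R ι : Type*} [CommRing R] (s : Finset ι) (G : ι → Polynomial (Polynomial R))
    (hG : ∀ i, degFilt 1 (G i)) (m : ι → ℕ) :
    degFilt (∑ i ∈ s, m i) (∏ i ∈ s, G i ^ m i) := by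
  induction s using Finset.induction_on with
  | empty => simpa using degFilt_one
  | insert a s ha ih =>
    rw [Finset.sum_insert ha, Finset.prod_insert ha]
    exact degFilt_mul (degFilt_pow (hG a) _) ih

/-- The linear form `p + q S + y T`. -/
def lin3 {R : Type*} [CommRing R] (p q y : R) : Polynomial (Polynomial R) :=
  Polynomial.C (Polynomial.C p + Polynomial.C q * Polynomial.X) +
    Polynomial.C (Polynomial.C y) * Polynomial.X

lemma degFilt_lin3 {R : Type*} [CommRing R] (p q y : R) : degFilt 1 (lin3 p q y) := by
  intro k j hkj
  rcases k with _ | _ | k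
  · have h1 : (lin3 p q y).coeff 0 = Polynomial.C p + Polynomial.C q * Polynomial.X := by
      simp [lin3]
    rw [h1, Polynomial.coeff_add, Polynomial.coeff_C_mul, Polynomial.coeff_C,
      Polynomial.coeff_X, if_neg (by omega), if_neg (by omega)]
    simp
  · simp only [lin3, Polynomial.coeff_add, Polynomial.coeff_C_mul, Polynomial.coeff_C,
      Polynomial.coeff_X]
    simp [Polynomial.coeff_one, show j ≠ 0 by omega]
  · simp [lin3]

lemma degFilt_aeval {R σ : Type*} [CommRing R] [Algebra ℂ R] [Fintype σ]
    (G : σ → Polynomial (Polynomial R)) (hG : ∀ i, degFilt 1 (G i))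
    (f : MvPolynomial σ ℂ) (D : ℕ) (hf : f.IsHomogeneous D) : degFilt D (aeval G f) := by
  intro k j hkj
  rw [aeval_def, eval₂_eq', Polynomial.finsetSum_coeff, Polynomial.finsetSum_coeff]
  refine Finset.sum_eq_zero fun m hm => ?_
  have hD : ∑ i, m i = D := by
    have := hf (mem_support_iff.mp hm)
    rw [← this]
    simp [Finsupp.weight_apply, Finsupp.sum_fintype]
  have h1 := degFilt_prod Finset.univ G hG m
  rw [hD] at h1
  have h2 : (algebraMap ℂ (Polynomial (Polynomial R))) (coeff m f) =
      Polynomial.C (Polynomial.C (algebraMap ℂ R (coeff m f))) := rfl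
  rw [h2, Polynomial.coeff_C_mul, Polynomial.coeff_C_mul, h1 k j hkj, mul_zero]

lemma homog_one_eq {k σ : Type*} [CommRing k] [Fintype σ]
    (p : MvPolynomial σ k) (hp : p.IsHomogeneous 1) :
    p = ∑ i, C (coeff (Finsupp.single i 1) p) * X i := by
  ext m
  rw [coeff_sum]
  by_cases hm : m.degree = 1
  · obtain ⟨i, rfl⟩ : ∃ i, m = Finsupp.single i 1 := by
      have hne : m ≠ 0 := by rintro rfl; simp at hm
      obtain ⟨i, hi⟩ := Finsupp.ne_iff.mp hne
      refine ⟨i, ?_⟩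
      have h1 : Finsupp.single i 1 ≤ m := by
        rw [Finsupp.single_le_iff]
        simp at hi; omega
      obtain ⟨c, rfl⟩ := le_iff_exists_add.mp h1
      have : c.degree = 0 := by
        rw [map_add, Finsupp.degree_single] at hm; omega
      rw [Finsupp.degree_eq_zero_iff] at this
      simp [this]
    rw [Finset.sum_eq_single i]
    · simp
    · intro j _ hj
      rw [coeff_C_mul, coeff_X, if_neg, mul_zero]
      intro h
      exact hj (Finsupp.single_left_injective one_ne_zero h)
    · simp
  · rw [hp.coeff_eq_zero hm]
    symm
    refine Finset.sum_eq_zero fun j _ => ?_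
    rw [coeff_C_mul, coeff_X, if_neg, mul_zero]
    rintro rfl
    simp at hm

lemma aeval_linear {k B σ : Type*} [CommRing k] [CommRing B] [Algebra k B] [Fintype σ] (G : σ → B)
    (p : MvPolynomial σ k) (hp : p.IsHomogeneous 1) :
    aeval G p = ∑ i, algebraMap k B (coeff (Finsupp.single i 1) p) * G i := by
  have h := homog_one_eq p hp
  conv_lhs => rw [h]
  simp

/-- Vanishing order at `v + z u` gives divisibility of the `T^k`-coefficient. -/
lemma dvd_coeff_of_mem {n : ℕ} {R : Type*} [CommRing R] [Algebra ℂ R]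
    (v u : Fin (n + 1) → ℝ) (z : ℝ) (y : Fin (n + 1) → R) (e k : ℕ)
    (f : MvPolynomial (Fin (n + 1)) ℂ) (hf : f ∈ pointIdealC (v + z • u) ^ e) :
    (Polynomial.X - Polynomial.C (algebraMap ℂ R z)) ^ (e - k) ∣
      (aeval (fun i => lin3 (algebraMap ℂ R (v i)) (algebraMap ℂ R (u i)) (y i)) f).coeff k := by
  set Ψ := aeval (R := ℂ)
    (fun i => lin3 (algebraMap ℂ R (v i)) (algebraMap ℂ R (u i)) (y i)) with hΨ
  have h1 : Ψ f ∈ (Ideal.map Ψ.toRingHom (pointIdealC (v + z • u))) ^ e := by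
    rw [← Ideal.map_pow]
    exact Ideal.mem_map_of_mem _ hf
  refine pow_le_coeffIdeal _ _ ?_ e h1 k
  have h2 : Ideal.map Ψ.toRingHom (pointIdealC (v + z • u)) ≤
      coeffIdeal (Polynomial.X - Polynomial.C (algebraMap ℂ R z)) 1 := by
    rw [pointIdealC, Ideal.map_span, Ideal.span_le]
    rintro _ ⟨p, ⟨hp, hp0⟩, rfl⟩ k
    rcases Nat.eq_zero_or_pos k with rfl | hk
    swap
    · simp [show 1 - k = 0 by omega]
    have h3 := aeval_linear (fun i => ((v + z • u) i : ℂ)) p hp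
    rw [← MvPolynomial.coe_aeval_eq_eval] at hp0
    have h3 : ∑ i, coeff (Finsupp.single i 1) p * ((v i : ℂ) + z * u i) = 0 := by
      rw [← hp0]
      simpa using h3.symm
    have h4 : Ψ.toRingHom p = _ := aeval_linear _ p hp
    rw [h4]
    refine ⟨Polynomial.C (algebraMap ℂ R (∑ i, coeff (Finsupp.single i 1) p * (u i : ℂ))), ?_⟩
    have h5 : (algebraMap ℂ R) (∑ i, coeff (Finsupp.single i 1) p * ((v i : ℂ))) =
        - algebraMap ℂ R z * (algebraMap ℂ R)
          (∑ i, coeff (Finsupp.single i 1) p * ((u i : ℂ))) := by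
      rw [← map_neg, ← map_mul]
      congr 1
      rw [Finset.mul_sum, eq_comm, ← sub_eq_zero, ← Finset.sum_sub_distrib, ← neg_eq_zero,
        ← Finset.sum_neg_distrib, ← h3]
      exact Finset.sum_congr rfl fun i _ => by ring
    rw [Polynomial.finsetSum_coeff]
    have h6 : ∀ i, ((algebraMap ℂ (Polynomial (Polynomial R))) (coeff (Finsupp.single i 1) p) *
        lin3 (algebraMap ℂ R (v i)) (algebraMap ℂ R (u i)) (y i)).coeff 0 =
        Polynomial.C (algebraMap ℂ R (coeff (Finsupp.single i 1) p * v i)) +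
        Polynomial.C (algebraMap ℂ R (coeff (Finsupp.single i 1) p * u i)) * Polynomial.X := by
      intro i
      have h2 : (algebraMap ℂ (Polynomial (Polynomial R))) (coeff (Finsupp.single i 1) p) =
        Polynomial.C (Polynomial.C (algebraMap ℂ R (coeff (Finsupp.single i 1) p))) := rfl
      rw [h2, Polynomial.coeff_C_mul]
      simp [lin3]
      ring
    simp_rw [h6]
    rw [Finset.sum_add_distrib, ← Finset.sum_mul, ← map_sum, ← map_sum, ← map_sum, ← map_sum, h5]
    simp
    ring
  intro g hg
  simpa using h2 hg 0

end PolyPart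

section PolyPart2

lemma eq_zero_of_roots {R : Type*} [CommRing R] [IsDomain R] [Algebra ℂ R]
    (Z : Finset ℝ) (E : ℝ → ℕ) (g : Polynomial R)
    (hdvd : ∀ z ∈ Z, (Polynomial.X - Polynomial.C (algebraMap ℂ R z)) ^ E z ∣ g)
    (hdeg : ∀ j, ∑ z ∈ Z, E z ≤ j → g.coeff j = 0) : g = 0 := by
  have h1 : ∏ z ∈ Z, (Polynomial.X - Polynomial.C (algebraMap ℂ R z)) ^ E z ∣ g := by
    refine Finset.prod_dvd_of_coprime (fun a _ b _ hab => ?_) hdvd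
    refine IsCoprime.pow (Polynomial.isCoprime_X_sub_C_of_isUnit_sub ?_)
    rw [← map_sub]
    refine IsUnit.map _ (IsUnit.mk0 _ ?_)
    rw [sub_ne_zero]
    exact_mod_cast hab
  have hm : (∏ z ∈ Z, (Polynomial.X - Polynomial.C (algebraMap ℂ R z)) ^ E z).natDegree
      = ∑ z ∈ Z, E z := by
    rw [Polynomial.natDegree_prod_of_monic]
    · simp
    · intro i _
      exact (Polynomial.monic_X_sub_C _).pow _
  by_contra hg
  have h2 := Polynomial.natDegree_le_of_dvd h1 hg
  rw [hm] at h2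
  exact hg (Polynomial.leadingCoeff_eq_zero.mp (hdeg _ h2))

lemma aeval_mul_homog {B σ : Type*} [CommRing B] [Algebra ℂ B] [Fintype σ] (c : B) (G : σ → B)
    (f : MvPolynomial σ ℂ) (D : ℕ) (hf : f.IsHomogeneous D) :
    aeval (fun i => c * G i) f = c ^ D * aeval G f := by
  rw [aeval_def, aeval_def, eval₂_eq', eval₂_eq', Finset.mul_sum]
  refine Finset.sum_congr rfl fun m hm => ?_
  have hD : ∑ i, m i = D := by
    have := hf (mem_support_iff.mp hm)
    rw [← this]
    simp [Finsupp.weight_apply, Finsupp.sum_fintype]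
  simp_rw [mul_pow]
  rw [Finset.prod_mul_distrib, Finset.prod_pow_eq_pow_sum, hD]
  ring

/-- Normal coordinates at `v`. -/
def ycoord {n : ℕ} (v : Fin (n + 1) → ℝ) (i0 i : Fin (n + 1)) :
    MvPolynomial (Fin (n + 1)) ℂ := X i - C ((v i : ℂ) / v i0) * X i0

lemma ycoord_mem {n : ℕ} (v : Fin (n + 1) → ℝ) (i0 i : Fin (n + 1)) (h0 : v i0 ≠ 0) :
    ycoord v i0 i ∈ pointIdealC v := by
  have h0' : (v i0 : ℂ) ≠ 0 := by exact_mod_cast h0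
  refine Ideal.subset_span ⟨?_, ?_⟩
  · refine (isHomogeneous_X _ _).sub ?_
    simpa using (isHomogeneous_C (Fin (n + 1)) ((v i : ℂ) / v i0)).mul (isHomogeneous_X ℂ i0)
  · simp [ycoord, h0']

lemma mem_pow_of_coeff {n : ℕ} (v u : Fin (n + 1) → ℝ) (i0 : Fin (n + 1)) (h0 : v i0 ≠ 0)
    (f : MvPolynomial (Fin (n + 1)) ℂ) (D e : ℕ) (hf : f.IsHomogeneous D)
    (hc : ∀ k < e, (aeval (fun i => lin3 (algebraMap ℂ (MvPolynomial (Fin (n + 1)) ℂ) (v i))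
      (algebraMap ℂ (MvPolynomial (Fin (n + 1)) ℂ) (u i)) (ycoord v i0 i)) f).coeff k = 0) :
    f ∈ pointIdealC v ^ e := by
  have h0' : (v i0 : ℂ) ≠ 0 := by exact_mod_cast h0
  set G : Fin (n + 1) → Polynomial (Polynomial (MvPolynomial (Fin (n + 1)) ℂ)) := fun i => lin3 (algebraMap ℂ (MvPolynomial (Fin (n + 1)) ℂ) (v i))
      (algebraMap ℂ (MvPolynomial (Fin (n + 1)) ℂ) (u i)) (ycoord v i0 i) with hG
  set g := aeval G f with hg
  have hdf : degFilt D g := degFilt_aeval G (fun i => degFilt_lin3 _ _ _) f D hf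
  set Gp : Fin (n + 1) → Polynomial (MvPolynomial (Fin (n + 1)) ℂ) := fun i => Polynomial.C (algebraMap ℂ (MvPolynomial (Fin (n + 1)) ℂ) (v i)) +
    Polynomial.C (ycoord v i0 i) * Polynomial.X with hGp
  set p : Polynomial (MvPolynomial (Fin (n + 1)) ℂ) := aeval Gp f with hp
  have hpg : p = g.map (Polynomial.evalRingHom 0) := by
    have h1 : (Polynomial.mapAlgHom ((Polynomial.aeval (R := MvPolynomial (Fin (n + 1)) ℂ) (0 : (MvPolynomial (Fin (n + 1)) ℂ))).restrictScalars ℂ)) g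
        = p := by
      rw [hg, hp, ← AlgHom.comp_apply, comp_aeval]
      congr 2
      funext i
      simp [hG, hGp, lin3]
    rw [← h1]
    ext k
    simp [Polynomial.coeff_map]
  have hpc : ∀ k, p.coeff k = (g.coeff k).coeff 0 := by
    intro k
    rw [hpg, Polynomial.coeff_map, Polynomial.coe_evalRingHom, Polynomial.coeff_zero_eq_eval_zero]
  have hrees : p ∈ reesAlgebra (pointIdealC v) := by
    have : ∀ i, Gp i ∈ (reesAlgebra (pointIdealC v)).restrictScalars ℂ := by
      intro i
      refine add_mem ?_ ?_
      · exact (reesAlgebra (pointIdealC v)).algebraMap_mem (algebraMap ℂ (MvPolynomial (Fin (n + 1)) ℂ) (v i))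
      · rw [Polynomial.C_mul_X_eq_monomial]
        refine reesAlgebra.monomial_mem.mpr ?_
        rw [pow_one]
        exact ycoord_mem v i0 i h0
    have h2 : p ∈ (reesAlgebra (pointIdealC v)).restrictScalars ℂ := by
      rw [hp, aeval_def, eval₂_eq']
      refine sum_mem fun m _ => mul_mem (Subalgebra.algebraMap_mem _ _)
        (prod_mem fun i _ => pow_mem (this i) _)
    exact h2
  rw [mem_reesAlgebra_iff] at hrees
  have hnd : p.natDegree < D + 1 := by
    rw [Nat.lt_succ_iff, Polynomial.natDegree_le_iff_coeff_eq_zero]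
    intro k hk
    rw [hpc, hdf k 0 (by omega)]
  -- the identity `f = ∑ c_k a^(D-k)`
  set a : (MvPolynomial (Fin (n + 1)) ℂ) := C (1 / (v i0 : ℂ)) * X i0 with ha
  have ha0 : a ≠ 0 := by
    rw [ha]
    refine mul_ne_zero ?_ (X_ne_zero _)
    rw [Ne, C_eq_zero]
    exact one_div_ne_zero h0'
  have hid : f = ∑ k ∈ Finset.range (D + 1), p.coeff k * a ^ (D - k) := by
    apply IsFractionRing.injective (MvPolynomial (Fin (n + 1)) ℂ) (FractionRing (MvPolynomial (Fin (n + 1)) ℂ))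
    set ι := algebraMap (MvPolynomial (Fin (n + 1)) ℂ) (FractionRing (MvPolynomial (Fin (n + 1)) ℂ)) with hι
    have hιa : ι a ≠ 0 := by
      rw [Ne, map_eq_zero_iff _ (IsFractionRing.injective (MvPolynomial (Fin (n + 1)) ℂ) (FractionRing (MvPolynomial (Fin (n + 1)) ℂ)))]
      exact ha0
    have e1 : ι f = aeval (fun i => ι a * (algebraMap ℂ (FractionRing (MvPolynomial (Fin (n + 1)) ℂ)) (v i) +
        ι (ycoord v i0 i) * (ι a)⁻¹)) f := by
      have : (fun i => ι a * (algebraMap ℂ (FractionRing (MvPolynomial (Fin (n + 1)) ℂ)) (v i) +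
        ι (ycoord v i0 i) * (ι a)⁻¹)) = fun i => ι (X i) := by
        funext i
        have h3 : ι a * (algebraMap ℂ (FractionRing (MvPolynomial (Fin (n + 1)) ℂ)) (v i) +
          ι (ycoord v i0 i) * (ι a)⁻¹) = ι (a * algebraMap ℂ (MvPolynomial (Fin (n + 1)) ℂ) (v i) + ycoord v i0 i) := by
          rw [map_add ι, map_mul ι a, mul_add, mul_left_comm, mul_inv_cancel₀ hιa, mul_one]
          rw [hι, ← IsScalarTower.algebraMap_apply ℂ (MvPolynomial (Fin (n + 1)) ℂ) (FractionRing (MvPolynomial (Fin (n + 1)) ℂ))]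
        rw [h3]
        congr 1
        rw [ha, ycoord, MvPolynomial.algebraMap_eq, mul_right_comm, ← C_mul]
        rw [show 1 / (v i0 : ℂ) * v i = v i / v i0 by ring]
        ring
      rw [this]
      have h4 := (aeval_unique (IsScalarTower.toAlgHom ℂ (MvPolynomial (Fin (n + 1)) ℂ) (FractionRing (MvPolynomial (Fin (n + 1)) ℂ))))
      have h5 := congrArg (fun φ => φ f) h4
      exact h5
    rw [e1, aeval_mul_homog _ _ _ D hf]
    have e2 : aeval (fun i => algebraMap ℂ (FractionRing (MvPolynomial (Fin (n + 1)) ℂ)) (v i) +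
        ι (ycoord v i0 i) * (ι a)⁻¹) f = Polynomial.eval₂ ι (ι a)⁻¹ p := by
      have h6 : Polynomial.eval₂ ι (ι a)⁻¹ p =
          ((Polynomial.aeval (R := MvPolynomial (Fin (n + 1)) ℂ) (ι a)⁻¹).restrictScalars ℂ) p := rfl
      rw [h6, hp, ← AlgHom.comp_apply, comp_aeval]
      congr 2
      funext i
      simp [hGp, hι]
      rfl
    rw [e2, Polynomial.eval₂_eq_sum_range' ι hnd, map_sum, Finset.mul_sum]
    refine Finset.sum_congr rfl fun k hk => ?_
    have hk' : k ≤ D := by simpa [Nat.lt_succ_iff] using hk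
    obtain ⟨m, rfl⟩ := Nat.exists_eq_add_of_le hk'
    rw [map_mul ι (p.coeff k), map_pow ι a, Nat.add_sub_cancel_left, pow_add, inv_pow]
    field_simp
  rw [hid]
  refine sum_mem fun k _ => ?_
  by_cases hk : k < e
  · rw [hpc, hc k hk]
    simp
  · exact Ideal.mul_mem_right _ _ (Ideal.pow_le_pow_right (by omega) (hrees k))

end PolyPart2

section LinPart

/-- The facet equation as a linear functional. -/
def lam {n d : ℕ} (ℓ : Fin d → MvPolynomial (Fin (n + 1)) ℝ) (i : Fin d) :
    Module.Dual ℝ (Fin (n + 1) → ℝ) :=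
  ∑ j, coeff (Finsupp.single j 1) (ℓ i) • LinearMap.proj j

lemma eval_eq_lam {n d : ℕ} {ℓ : Fin d → MvPolynomial (Fin (n + 1)) ℝ}
    (hhom : ∀ i, (ℓ i).IsHomogeneous 1) (i : Fin d) (x : Fin (n + 1) → ℝ) :
    eval x (ℓ i) = lam ℓ i x := by
  rw [← MvPolynomial.coe_aeval_eq_eval]
  simpa [lam] using aeval_linear x (ℓ i) (hhom i)

/-- Linear functionals to linear forms. -/
def dualToPoly (n : ℕ) :
    Module.Dual ℝ (Fin (n + 1) → ℝ) →ₗ[ℝ] MvPolynomial (Fin (n + 1)) ℝ where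
  toFun φ := ∑ j, C (φ (Pi.single j 1)) * X j
  map_add' := by intro a b; simp [add_mul, Finset.sum_add_distrib]
  map_smul' := by intro a b; simp [Finset.smul_sum, MvPolynomial.smul_eq_C_mul, mul_assoc]

lemma dualToPoly_inj (n : ℕ) : Function.Injective (dualToPoly n) := by
  intro φ ψ h
  have h1 : ∀ x : Fin (n + 1) → ℝ, ∀ φ, eval x (dualToPoly n φ) = φ x := by
    intro x φ
    rw [LinearMap.pi_apply_eq_sum_univ φ x]
    simp [dualToPoly, mul_comm]
    refine Finset.sum_congr rfl fun i _ => ?_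
    congr 2
    funext j
    simp [Pi.single_apply, eq_comm]
  ext1 x
  ext
  simp only [LinearMap.comp_apply, ← h1, h]

lemma dualToPoly_lam {n d : ℕ} {ℓ : Fin d → MvPolynomial (Fin (n + 1)) ℝ}
    (hhom : ∀ i, (ℓ i).IsHomogeneous 1) (i : Fin d) : dualToPoly n (lam ℓ i) = ℓ i := by
  conv_rhs => rw [homog_one_eq _ (hhom i)]
  simp [dualToPoly, lam, Pi.single_apply, MvPolynomial.smul_eq_C_mul]

/-- The linear subspace `L_v`. -/
def Kv {n d : ℕ} (ℓ : Fin d → MvPolynomial (Fin (n + 1)) ℝ) (v : Fin (n + 1) → ℝ) :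
    Submodule ℝ (Fin (n + 1) → ℝ) :=
  (Submodule.span ℝ (lam ℓ '' (flatOf ℓ v : Set (Fin d)))).dualCoannihilator

lemma mem_Kv {n d : ℕ} {ℓ : Fin d → MvPolynomial (Fin (n + 1)) ℝ} {v x : Fin (n + 1) → ℝ} :
    x ∈ Kv ℓ v ↔ ∀ i ∈ flatOf ℓ v, lam ℓ i x = 0 := by
  rw [Kv, Submodule.mem_dualCoannihilator]
  constructor
  · intro h i hi
    exact h _ (Submodule.subset_span ⟨i, hi, rfl⟩)
  · intro h φ hφ
    induction hφ using Submodule.span_induction with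
    | mem x hx => obtain ⟨i, hi, rfl⟩ := hx; exact h i hi
    | zero => simp
    | add a b _ _ ha hb => simp [ha, hb]
    | smul c a _ ha => simp [ha]

lemma mem_flatOf {n d : ℕ} {ℓ : Fin d → MvPolynomial (Fin (n + 1)) ℝ}
    (hhom : ∀ i, (ℓ i).IsHomogeneous 1) {v : Fin (n + 1) → ℝ} {i : Fin d} :
    i ∈ flatOf ℓ v ↔ lam ℓ i v = 0 := by
  simp [flatOf, eval_eq_lam hhom]

lemma self_mem_Kv {n d : ℕ} {ℓ : Fin d → MvPolynomial (Fin (n + 1)) ℝ}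
    (hhom : ∀ i, (ℓ i).IsHomogeneous 1) (v : Fin (n + 1) → ℝ) : v ∈ Kv ℓ v :=
  mem_Kv.mpr fun _ hi => (mem_flatOf hhom).mp hi

lemma rk_add {n d : ℕ} {ℓ : Fin d → MvPolynomial (Fin (n + 1)) ℝ}
    (hhom : ∀ i, (ℓ i).IsHomogeneous 1) (v : Fin (n + 1) → ℝ) :
    rkOf ℓ v + Module.finrank ℝ (Kv ℓ v) = n + 1 := by
  have h1 : Submodule.span ℝ (ℓ '' (flatOf ℓ v : Set (Fin d))) =
      (Submodule.span ℝ (lam ℓ '' (flatOf ℓ v : Set (Fin d)))).map (dualToPoly n) := by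
    rw [Submodule.map_span, ← Set.image_comp]
    congr 1
    refine Set.image_congr fun i _ => ?_
    simp [dualToPoly_lam hhom]
  rw [rkOf, h1, ← (Submodule.equivMapOfInjective _ (dualToPoly_inj n) _).finrank_eq, Kv,
    Subspace.finrank_add_finrank_dualCoannihilator_eq]
  simp

lemma rk_le_card {n d : ℕ} (ℓ : Fin d → MvPolynomial (Fin (n + 1)) ℝ) (v : Fin (n + 1) → ℝ) :
    rkOf ℓ v ≤ (flatOf ℓ v).card := by
  rw [rkOf, ← Finset.coe_image]
  exact (finrank_span_finset_le_card _).trans Finset.card_image_le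

lemma finrank_span_lift {n : ℕ} (S : Set (Fin n → ℝ)) (hS : S.Nonempty) :
    Module.finrank ℝ (Submodule.span ℝ (lift1 '' S)) =
      Module.finrank ℝ (affineSpan ℝ S).direction + 1 := by
  obtain ⟨y, hy⟩ := hS
  let c : (Fin n → ℝ) →ₗ[ℝ] (Fin (n + 1) → ℝ) :=
    { toFun := fun w => Fin.cons 0 w
      map_add' := by
        intro a b; funext i; refine Fin.cases ?_ (fun j => ?_) i <;> simp
      map_smul' := by
        intro a b; funext i; refine Fin.cases ?_ (fun j => ?_) i <;> simp }
  have hc : Function.Injective c := by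
    intro a b h
    funext j
    simpa [c] using congrFun h j.succ
  have hlift : ∀ a b : Fin n → ℝ, c (a - b) = lift1 a - lift1 b := by
    intro a b
    funext i; refine Fin.cases ?_ (fun j => ?_) i <;> simp [c, lift1]
  have hsp : Submodule.span ℝ (lift1 '' S) =
      (vectorSpan ℝ S).map c ⊔ Submodule.span ℝ {lift1 y} := by
    apply le_antisymm
    · rw [Submodule.span_le]
      rintro _ ⟨z, hz, rfl⟩
      have : lift1 z = c (z - y) + lift1 y := by rw [hlift]; simp
      rw [this]
      exact Submodule.add_mem_sup
        (Submodule.mem_map_of_mem (vsub_mem_vectorSpan ℝ hz hy))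
        (Submodule.mem_span_singleton_self _)
    · refine sup_le ?_ ?_
      · rw [vectorSpan_eq_span_vsub_set_right ℝ hy, Submodule.map_span, Submodule.span_le]
        rintro _ ⟨_, ⟨z, hz, rfl⟩, rfl⟩
        simp only [vsub_eq_sub, hlift]
        exact Submodule.sub_mem _ (Submodule.subset_span ⟨z, hz, rfl⟩)
          (Submodule.subset_span ⟨y, hy, rfl⟩)
      · rw [Submodule.span_le]
        rintro _ rfl
        exact Submodule.subset_span ⟨y, hy, rfl⟩
  have hinf : (vectorSpan ℝ S).map c ⊓ Submodule.span ℝ {lift1 y} = ⊥ := by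
    rw [eq_bot_iff]
    rintro x ⟨⟨w, _, rfl⟩, h2⟩
    obtain ⟨t, ht⟩ := Submodule.mem_span_singleton.mp h2
    have h0 := congrFun ht 0
    have : t = 0 := by simpa [c, lift1] using h0
    rw [Submodule.mem_bot, ← ht, this, zero_smul]
  have hne : lift1 y ≠ 0 := by
    intro h
    have := congrFun h 0
    simp [lift1] at this
  have := Submodule.finrank_sup_add_finrank_inf_eq ((vectorSpan ℝ S).map c)
    (Submodule.span ℝ {lift1 y})
  rw [hinf, finrank_bot, finrank_span_singleton hne, ← (Submodule.equivMapOfInjective c hc _).finrank_eq] at this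
  rw [hsp, direction_affineSpan]
  omega

/-- The span of the homogenized face. -/
def Cv {n d : ℕ} (ℓ : Fin d → MvPolynomial (Fin (n + 1)) ℝ) (v : Fin (n + 1) → ℝ) :
    Submodule ℝ (Fin (n + 1) → ℝ) := Submodule.span ℝ (lift1 '' faceOf ℓ v)

lemma Cv_le_Kv {n d : ℕ} {ℓ : Fin d → MvPolynomial (Fin (n + 1)) ℝ}
    (hhom : ∀ i, (ℓ i).IsHomogeneous 1) (v : Fin (n + 1) → ℝ) : Cv ℓ v ≤ Kv ℓ v := by
  rw [Cv, Submodule.span_le]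
  rintro _ ⟨y, hy, rfl⟩
  refine mem_Kv.mpr fun i hi => ?_
  rw [← eval_eq_lam hhom]
  exact hy.2 i hi

/-- The defect. -/
def eps {n d : ℕ} (ℓ : Fin d → MvPolynomial (Fin (n + 1)) ℝ) (v : Fin (n + 1) → ℝ) : ℕ :=
  if Cv ℓ v = Kv ℓ v then 0 else 1

lemma finrank_Kv_pos {n d : ℕ} {ℓ : Fin d → MvPolynomial (Fin (n + 1)) ℝ}
    (hhom : ∀ i, (ℓ i).IsHomogeneous 1) (v : Fin (n + 1) → ℝ) (hv : v ≠ 0) :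
    0 < Module.finrank ℝ (Kv ℓ v) := by
  rw [Module.finrank_pos_iff]
  exact ⟨⟨v, self_mem_Kv hhom v⟩, 0, fun h => hv (congrArg Subtype.val h)⟩

lemma ordOf_eq {n d : ℕ} {ℓ : Fin d → MvPolynomial (Fin (n + 1)) ℝ}
    (hhom : ∀ i, (ℓ i).IsHomogeneous 1) (v : Fin (n + 1) → ℝ) (hv : v ≠ 0) :
    ordOf ℓ v = nlOf ℓ v + eps ℓ v := by
  have h1 := rk_add hhom v
  have h2 := finrank_Kv_pos hhom v hv
  have key : ((faceOf ℓ v).Nonempty ∧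
      Module.finrank ℝ (affineSpan ℝ (faceOf ℓ v)).direction = n - rkOf ℓ v) ↔
      Cv ℓ v = Kv ℓ v := by
    constructor
    · rintro ⟨hS, hr⟩
      have h3 := finrank_span_lift _ hS
      exact Submodule.eq_of_le_of_finrank_eq (Cv_le_Kv hhom v) (by rw [Cv]; omega)
    · intro h
      have hS : (faceOf ℓ v).Nonempty := by
        by_contra hS
        rw [Set.not_nonempty_iff_eq_empty] at hS
        rw [← h, Cv, hS, Set.image_empty, Submodule.span_empty, finrank_bot] at h2
        exact lt_irrefl _ h2
      have h3 := finrank_span_lift _ hS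
      refine ⟨hS, ?_⟩
      rw [← h, Cv] at h1
      omega
  rw [ordOf, eps]
  by_cases h : Cv ℓ v = Kv ℓ v
  · rw [if_pos (key.mpr h), if_pos h]; rfl
  · rw [if_neg (fun h' => h (key.mp h')), if_neg h]

lemma common_zero {n d : ℕ} {ℓ : Fin d → MvPolynomial (Fin (n + 1)) ℝ} (hP : IsPolytopeSetup ℓ)
    (x : Fin (n + 1) → ℝ) (hx : ∀ i, lam ℓ i x = 0) : x = 0 := by
  by_contra hx0
  obtain ⟨i0⟩ : Nonempty (Fin d) := ⟨⟨0, by have := hP.hd; omega⟩⟩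
  -- it suffices to find a ray in `P`
  have ray : ∀ a w : Fin n → ℝ, w ≠ 0 → ¬ ∀ t : ℝ, 0 ≤ t → a + t • w ∈ polytopeOf ℓ := by
    intro a w hw h
    obtain ⟨B, hB⟩ := hP.hcpt.isBounded.exists_norm_le
    have hw' : 0 < ‖w‖ := norm_pos_iff.mpr hw
    have ha : ‖a‖ ≤ B := by simpa using hB _ (h 0 le_rfl)
    have hB0 : 0 ≤ B := (norm_nonneg a).trans ha
    have ht : 0 ≤ (2 * B + 1) / ‖w‖ := by positivity
    have h1 := hB _ (h _ ht)
    have h2 : ‖((2 * B + 1) / ‖w‖) • w‖ = 2 * B + 1 := by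
      rw [norm_smul, Real.norm_of_nonneg ht]
      field_simp
    have h3 := norm_sub_le (a + ((2 * B + 1) / ‖w‖) • w) a
    rw [add_sub_cancel_left, h2] at h3
    linarith
  by_cases h0 : x 0 = 0
  · obtain ⟨y, hy⟩ := hP.hfacet_ne i0
    refine ray y (Fin.tail x) ?_ ?_
    · intro h
      apply hx0
      funext i
      refine Fin.cases h0 (fun j => ?_) i
      exact congrFun h j
    · intro t _ i
      have : lift1 (y + t • Fin.tail x) = lift1 y + t • x := by
        funext i; refine Fin.cases ?_ (fun j => ?_) i <;> simp [lift1, h0, Fin.tail]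
      rw [eval_eq_lam hP.hhom, this, map_add, map_smul, hx i, smul_zero, add_zero,
        ← eval_eq_lam hP.hhom]
      exact hy.1 i
  · set c : Fin n → ℝ := (x 0)⁻¹ • Fin.tail x with hc
    have hlc : lift1 c = (x 0)⁻¹ • x := by
      funext i; refine Fin.cases ?_ (fun j => ?_) i <;> simp [lift1, h0, hc, Fin.tail]
    obtain ⟨y, hy, hyc⟩ : ∃ y ∈ polytopeOf ℓ, y ≠ c := by
      by_contra! hcon
      have h1 : affineSpan ℝ (polytopeOf ℓ) ≤ affineSpan ℝ {c} := affineSpan_mono ℝ hcon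
      rw [hP.hfull] at h1
      have h2 : c + (fun _ => 1) ∈ affineSpan ℝ {c} := h1 (AffineSubspace.mem_top ℝ _ _)
      rw [AffineSubspace.mem_affineSpan_singleton] at h2
      have := congrFun h2 ⟨0, hP.hn⟩
      simp at this
    refine ray c (y - c) (sub_ne_zero.mpr hyc) ?_
    intro t ht i
    have : lift1 (c + t • (y - c)) = (1 - t) • lift1 c + t • lift1 y := by
      funext i; refine Fin.cases ?_ (fun j => ?_) i <;> simp [lift1]
      ring
    rw [eval_eq_lam hP.hhom, this, map_add, map_smul, map_smul, hlc, map_smul, hx i,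
      ← eval_eq_lam hP.hhom]
    simpa using mul_nonneg ht (hy i)

lemma exists_generic {E ι : Type*} [AddCommGroup E] [Module ℝ E] [Finite ι]
    (K : Submodule ℝ E) (φ : ι → Module.Dual ℝ E) :
    ∃ u ∈ K, ∀ a, φ a u = 0 → ∀ x ∈ K, φ a x = 0 := by
  by_contra! hcon
  have := Subspace.exists_eq_top_of_iUnion_eq_univ (k := ℝ) (E := K)
    (p := fun a : {a : ι // ¬ ∀ x ∈ K, φ a x = 0} => LinearMap.ker ((φ a).comp K.subtype)) (by
      rw [Set.eq_univ_iff_forall]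
      rintro ⟨u, hu⟩
      obtain ⟨a, ha, x, hx, hax⟩ := hcon u hu
      refine Set.mem_iUnion.mpr ⟨⟨a, fun h => hax (h x hx)⟩, ?_⟩
      simpa using ha)
  obtain ⟨⟨a, ha⟩, h⟩ := this
  apply ha
  intro x hx
  have : (⟨x, hx⟩ : K) ∈ LinearMap.ker ((φ a).comp K.subtype) := by rw [h]; trivial
  simpa using this

end LinPart

lemma step {n d : ℕ}
    (ℓ : Fin d → MvPolynomial (Fin (n + 1)) ℝ) (hP : IsPolytopeSetup ℓ)
    (f : MvPolynomial (Fin (n + 1)) ℂ) (hf : f.IsHomogeneous (d - n - 1))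
    (v : Fin (n + 1) → ℝ) (hv : v ≠ 0) (hrk : rkOf ℓ v < n)
    (ih : ∀ q : Fin (n + 1) → ℝ, q ≠ 0 → rkOf ℓ q = rkOf ℓ v + 1 →
      f ∈ pointIdealC q ^ ordOf ℓ q) : f ∈ pointIdealC v ^ ordOf ℓ v := by
  have hhom := hP.hhom
  obtain ⟨i0, hi0⟩ := Function.ne_iff.mp hv
  -- the generic direction
  obtain ⟨u, huK, hu⟩ := exists_generic (Kv ℓ v)
    (fun a : Fin d ⊕ (Fin d × Fin d) => Sum.elim (lam ℓ)
      (fun ij => lam ℓ ij.2 v • lam ℓ ij.1 - lam ℓ ij.1 v • lam ℓ ij.2) a)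
  have hvK := self_mem_Kv hhom v
  set F := flatOf ℓ v with hF
  have hFm : ∀ i, i ∈ F ↔ lam ℓ i v = 0 := fun i => mem_flatOf hhom
  have hu1 : ∀ j, j ∉ F → lam ℓ j u ≠ 0 := by
    intro j hj h
    exact hj ((hFm j).mpr (hu (Sum.inl j) h v hvK))
  have hFu : ∀ i ∈ F, lam ℓ i u = 0 := mem_Kv.mp huK
  have hu2 : ∀ i j, lam ℓ j v * lam ℓ i u = lam ℓ i v * lam ℓ j u → ∀ x ∈ Kv ℓ v,
      lam ℓ j v * lam ℓ i x = lam ℓ i v * lam ℓ j x := by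
    intro i j h x hx
    have := hu (Sum.inr (i, j)) (by simpa [sub_eq_zero] using h) x hx
    simpa [sub_eq_zero] using this
  set σ : Fin d → ℝ := fun j => - lam ℓ j v / lam ℓ j u with hσ
  set Z : Finset ℝ := Fᶜ.image σ with hZ
  set m : ℝ → ℕ := fun z => (Fᶜ.filter fun j => σ j = z).card with hm
  -- flats of the intersection points
  have hq : ∀ z i, lam ℓ i (v + z • u) = lam ℓ i v + z * lam ℓ i u := by
    intro z i; simp
  have hqout : ∀ z i, i ∉ F → (lam ℓ i (v + z • u) = 0 ↔ σ i = z) := by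
    intro z i hi
    have := hu1 i hi
    rw [hq, hσ]
    constructor
    · intro h
      field_simp
      linarith
    · rintro rfl
      field_simp
      ring
  have hflat : ∀ z, flatOf ℓ (v + z • u) = F ∪ (Fᶜ.filter fun j => σ j = z) := by
    intro z
    ext i
    rw [mem_flatOf hhom, Finset.mem_union, Finset.mem_filter, Finset.mem_compl]
    by_cases hi : i ∈ F
    · simp [hi, (hFm i).mp hi, hFu i hi]
    · rw [hqout z i hi]
      simp [hi]
  have hcard : ∀ z, (flatOf ℓ (v + z • u)).card = F.card + m z := by
    intro z
    rw [hflat, Finset.card_union_of_disjoint]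
    exact Finset.disjoint_left.mpr fun i hi hi' =>
      (Finset.mem_compl.mp (Finset.mem_filter.mp hi').1) hi
  have hKq : ∀ j, j ∉ F → Kv ℓ (v + σ j • u) = Kv ℓ v ⊓ LinearMap.ker (lam ℓ j) := by
    intro j hj
    ext x
    rw [Submodule.mem_inf, LinearMap.mem_ker, mem_Kv, hflat]
    constructor
    · intro h
      refine ⟨mem_Kv.mpr fun i hi => h i (Finset.mem_union_left _ hi), h j ?_⟩
      exact Finset.mem_union_right _ (by simp [hj])
    · rintro ⟨hx, hjx⟩ i hi
      rcases Finset.mem_union.mp hi with hi | hi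
      · exact mem_Kv.mp hx i hi
      · rw [Finset.mem_filter, Finset.mem_compl] at hi
        have h1 := hu1 i hi.1
        have h2 := hu1 j hj
        have h3 : lam ℓ j v * lam ℓ i u = lam ℓ i v * lam ℓ j u := by
          have := hi.2
          simp only [hσ] at this
          field_simp at this
          linarith
        have h4 := hu2 i j h3 x hx
        rw [hjx, mul_zero] at h4
        exact (mul_eq_zero.mp h4).resolve_left fun h => hj ((hFm j).mpr h)
  have hfin : ∀ z ∈ Z, Module.finrank ℝ (Kv ℓ (v + z • u)) + 1 = Module.finrank ℝ (Kv ℓ v) := by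
    intro z hz
    obtain ⟨j, hj, rfl⟩ := Finset.mem_image.mp hz
    rw [Finset.mem_compl] at hj
    rw [hKq j hj]
    have h1 := LinearMap.finrank_range_add_finrank_ker ((lam ℓ j).comp (Kv ℓ v).subtype)
    have h2 : LinearMap.range ((lam ℓ j).comp (Kv ℓ v).subtype) = ⊤ := by
      rw [LinearMap.range_eq_top]
      refine LinearMap.surjective ?_
      intro h
      apply hj
      rw [hFm]
      exact LinearMap.congr_fun h ⟨v, hvK⟩
    have h3 : Kv ℓ v ⊓ LinearMap.ker (lam ℓ j) =
        (LinearMap.ker ((lam ℓ j).comp (Kv ℓ v).subtype)).map (Kv ℓ v).subtype := by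
      rw [LinearMap.ker_comp, Submodule.map_comap_subtype]
    rw [h3, ← (Submodule.equivMapOfInjective _ (Kv ℓ v).injective_subtype _).finrank_eq]
    rw [h2, finrank_top, Module.finrank_self] at h1
    omega
  have hrkv := rk_add hhom v
  have hrkq : ∀ z ∈ Z, rkOf ℓ (v + z • u) = rkOf ℓ v + 1 := by
    intro z hz
    have h1 := hfin z hz
    have h2 := rk_add hhom (v + z • u)
    omega
  have hqne : ∀ z ∈ Z, v + z • u ≠ 0 := by
    intro z hz h0
    have h1 := hfin z hz
    have h2 : 0 < Module.finrank ℝ (Kv ℓ (v + z • u)) := by omega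
    rw [Module.finrank_pos_iff] at h2
    obtain ⟨⟨x, hx⟩, hx0⟩ := exists_ne (0 : Kv ℓ (v + z • u))
    apply hx0
    have : x = 0 := by
      refine common_zero hP x fun i => mem_Kv.mp hx i ?_
      rw [mem_flatOf hhom, h0, map_zero]
    simp [this]
  have hfq : ∀ z ∈ Z, f ∈ pointIdealC (v + z • u) ^ ordOf ℓ (v + z • u) :=
    fun z hz => ih _ (hqne z hz) (hrkq z hz)
  have hordq : ∀ z ∈ Z, ordOf ℓ (v + z • u) + (rkOf ℓ v + 1) =
      F.card + m z + eps ℓ (v + z • u) := by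
    intro z hz
    rw [ordOf_eq hhom _ (hqne z hz), nlOf, hrkq z hz, hcard]
    have := rk_le_card ℓ (v + z • u)
    rw [hrkq z hz, hcard] at this
    omega
  have hordv : ordOf ℓ v + rkOf ℓ v = F.card + eps ℓ v := by
    rw [ordOf_eq hhom _ hv, nlOf, ← hF]
    have := rk_le_card ℓ v
    rw [← hF] at this
    omega
  have hsum : F.card + ∑ z ∈ Z, m z = d := by
    have h1 : ∑ z ∈ Z, m z = Fᶜ.card := (Finset.card_eq_sum_card_image σ Fᶜ).symm
    rw [h1, Finset.card_add_card_compl]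
    simp
  have hmpos : ∀ z ∈ Z, 1 ≤ m z := by
    intro z hz
    obtain ⟨j, hj, rfl⟩ := Finset.mem_image.mp hz
    exact Finset.card_pos.mpr ⟨j, by simp [Finset.mem_compl.mp hj]⟩
  have hZne : Z.Nonempty := by
    rw [hZ, Finset.image_nonempty]
    by_contra hcon
    apply hv
    refine common_zero hP v fun i => (hFm i).mp ?_
    by_contra hi
    exact hcon ⟨i, Finset.mem_compl.mpr hi⟩
  have heps01 : ∀ x, eps ℓ x ≤ 1 := by
    intro x; rw [eps]; split_ifs <;> omega
  -- the face count
  have hone : eps ℓ v = 1 → ∀ z ∈ Z, ∀ z' ∈ Z, eps ℓ (v + z • u) = 0 → eps ℓ (v + z' • u) = 0 →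
      z = z' := by
    intro hev
    have hlt : Cv ℓ v < Kv ℓ v := by
      refine lt_of_le_of_ne (Cv_le_Kv hhom v) ?_
      intro h
      simp [eps, h] at hev
    have hlt' := Submodule.finrank_lt_finrank_of_lt hlt
    have hC : ∀ z ∈ Z, eps ℓ (v + z • u) = 0 → Kv ℓ (v + z • u) = Cv ℓ v := by
      intro z hz he
      have h1 : Cv ℓ (v + z • u) = Kv ℓ (v + z • u) := by
        by_contra h
        simp [eps, h] at he
      have h2 : Cv ℓ (v + z • u) ≤ Cv ℓ v := by
        refine Submodule.span_mono (Set.image_mono ?_)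
        rintro y ⟨hy, hy2⟩
        refine ⟨hy, fun i hi => hy2 i ?_⟩
        rw [hflat]
        exact Finset.mem_union_left _ hi
      rw [h1] at h2
      have h3 := hfin z hz
      exact Submodule.eq_of_le_of_finrank_le h2 (by omega)
    intro z hz z' hz' he he'
    have h1 := (hC z hz he).trans (hC z' hz' he').symm
    have h2 : v + z • u ∈ Kv ℓ (v + z' • u) := h1 ▸ self_mem_Kv hhom (v + z • u)
    obtain ⟨j, hj, rfl⟩ := Finset.mem_image.mp hz'
    rw [Finset.mem_compl] at hj
    rw [hKq j hj] at h2
    exact ((hqout z j hj).mp h2.2).symm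
  have heps : Z.card * eps ℓ v ≤ ∑ z ∈ Z, eps ℓ (v + z • u) + eps ℓ v := by
    rcases Nat.lt_or_ge (eps ℓ v) 1 with h | h
    · have : eps ℓ v = 0 := by omega
      simp [this]
    · have hev : eps ℓ v = 1 := le_antisymm (heps01 v) h
      have h1 : ∑ z ∈ Z, eps ℓ (v + z • u) + (Z.filter fun z => eps ℓ (v + z • u) = 0).card
          = Z.card := by
        rw [Finset.card_filter, ← Finset.sum_add_distrib, Finset.card_eq_sum_ones]
        refine Finset.sum_congr rfl fun z _ => ?_
        have := heps01 (v + z • u)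
        split_ifs <;> omega
      have h2 : (Z.filter fun z => eps ℓ (v + z • u) = 0).card ≤ 1 := by
        rw [Finset.card_le_one]
        intro a ha b hb
        rw [Finset.mem_filter] at ha hb
        exact hone hev a ha.1 b hb.1 ha.2 hb.2
      rw [hev]
      omega
  -- conclude
  refine mem_pow_of_coeff v u i0 hi0 f (d - n - 1) (ordOf ℓ v) hf fun k hk => ?_
  have hdf := degFilt_aeval _ (fun i => degFilt_lin3
    (algebraMap ℂ (MvPolynomial (Fin (n + 1)) ℂ) (v i))
      (algebraMap ℂ (MvPolynomial (Fin (n + 1)) ℂ) (u i)) (ycoord v i0 i)) f (d - n - 1) hf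
  refine eq_zero_of_roots Z (fun z => ordOf ℓ (v + z • u) - k) _
    (fun z hz => dvd_coeff_of_mem v u z _ _ k f (hfq z hz)) ?_
  intro j hj
  apply hdf
  have hd := hP.hd
  obtain ⟨s, hs⟩ := Nat.exists_eq_add_of_lt hk
  have hE : ∀ z ∈ Z, m z + eps ℓ (v + z • u) + s ≤ (ordOf ℓ (v + z • u) - k) + eps ℓ v := by
    intro z hz
    have h1 := hordq z hz
    have h2 := hmpos z hz
    have h3 := heps01 v
    omega
  have hE2 := Finset.sum_le_sum hE
  simp only [Finset.sum_add_distrib, Finset.sum_const, smul_eq_mul] at hE2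
  have hZs : s ≤ Z.card * s := Nat.le_mul_of_pos_left _ hZne.card_pos
  omega

theorem adjoint_reduction_to_dimension_zero {n d : ℕ}
    (ℓ : Fin d → MvPolynomial (Fin (n + 1)) ℝ) (hP : IsPolytopeSetup ℓ)
    (f : MvPolynomial (Fin (n + 1)) ℂ) (hf : f.IsHomogeneous (d - n - 1))
    (hvan : ∀ v : Fin (n + 1) → ℝ, v ≠ 0 → rkOf ℓ v = n →
      f ∈ pointIdealC v ^ ordOf ℓ v) :
    ∀ v : Fin (n + 1) → ℝ, v ≠ 0 → f ∈ pointIdealC v ^ ordOf ℓ v := by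
  have key : ∀ k : ℕ, ∀ v : Fin (n + 1) → ℝ, v ≠ 0 → rkOf ℓ v + k = n →
      f ∈ pointIdealC v ^ ordOf ℓ v := by
    intro k
    induction k with
    | zero => intro v hv h; exact hvan v hv (by omega)
    | succ k ih =>
      intro v hv h
      exact step ℓ hP f hf v hv (by omega) fun q hq hr => ih q hq (by omega)
  intro v hv
  have h1 := rk_add hP.hhom v
  have h2 := finrank_Kv_pos hP.hhom v hv
  exact key (n - rkOf ℓ v) v hv (by omega)

end
end
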